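/- Let 𝛑 be a policy ensemble with α ↦ π^α Lipschitz continuous up to finitely many discontinuities, and 𝛍 = Ψ(𝛑). Under Assumption (W) and Lipschitz continuity of P, for the N-agent policy tuple (π¹,…,π^{i−1},π̂,π^{i+1},…,π^N) with (π¹,…,π^N) = Γ_N(𝛑) and any deviation π̂ ∈ Π by agent i, for every t ∈ 𝒯 and every measurable f : 𝒳×[0,1] → ℝ with |f| ≤ M_f, one has E[ |𝛍^N_t(f) − 𝛍_t(f)| ] → 0 as N → ∞, uniformly over all deviations π̂ ∈ Π and i ∈ 𝒱_N. Moreover, if the convergence ‖W_N − W‖_{L∞→L1} → 0 is at rate O(1/√N), then this convergence is also at rate O(1/√N). -/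

import Mathlib

open MeasureTheory Filter
open scoped BigOperators

namespace GMFG

variable {𝒳 𝒰 : Type*}

/-- The probability simplex 𝒫(𝒳) on a finite set, as probability mass functions. -/
def simplex (𝒳 : Type*) [Fintype 𝒳] : Set (𝒳 → ℝ) :=
  {p | (∀ x, 0 ≤ p x) ∧ ∑ x, p x = 1}

/-- The set ℬ₁(𝒳) of (sub-probability) measures with total mass at most 1,
as mass functions. -/
def subProb (𝒳 : Type*) [Fintype 𝒳] : Set (𝒳 → ℝ) :=
  {p | (∀ x, 0 ≤ p x) ∧ ∑ x, p x ≤ 1}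

/-- L¹ distance between measures on a finite set. -/
noncomputable def l1dist [Fintype 𝒳] (ν ν' : 𝒳 → ℝ) : ℝ := ∑ x, |ν x - ν' x|

/-- Markovian feedback policies π ∈ Π = 𝒫(𝒰)^{𝒯×𝒳}. -/
def IsPolicy [Fintype 𝒰] (π : ℕ → 𝒳 → 𝒰 → ℝ) : Prop :=
  ∀ t x, (∀ u, 0 ≤ π t x u) ∧ ∑ u, π t x u = 1

/-- P : 𝒳×𝒰×ℬ₁(𝒳) → 𝒫(𝒳) is a transition kernel. -/
def IsKernel [Fintype 𝒳] [Fintype 𝒰] (P : 𝒳 → 𝒰 → (𝒳 → ℝ) → 𝒳 → ℝ) : Prop :=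
  ∀ x u ν, ν ∈ subProb 𝒳 → P x u ν ∈ simplex 𝒳

/-- Lipschitz continuity of the transition kernel w.r.t. the L¹ norm. -/
def KernelLipschitz [Fintype 𝒳] [Fintype 𝒰] (P : 𝒳 → 𝒰 → (𝒳 → ℝ) → 𝒳 → ℝ) (L : ℝ) : Prop :=
  ∀ x u ν ν', ν ∈ subProb 𝒳 → ν' ∈ subProb 𝒳 → l1dist (P x u ν) (P x u ν') ≤ L * l1dist ν ν'

/-- Lipschitz continuity of the reward w.r.t. the L¹ norm. -/
def RewardLipschitz [Fintype 𝒳] [Fintype 𝒰] (r : 𝒳 → 𝒰 → (𝒳 → ℝ) → ℝ) (L : ℝ) : Prop :=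
  ∀ x u ν ν', ν ∈ subProb 𝒳 → ν' ∈ subProb 𝒳 → |r x u ν - r x u ν'| ≤ L * l1dist ν ν'

/-- A graphon: symmetric, measurable, [0,1]-valued. -/
def IsGraphon (W : ℝ → ℝ → ℝ) : Prop :=
  Measurable (Function.uncurry W) ∧ (∀ a b, W a b = W b a) ∧ ∀ a b, W a b ∈ Set.Icc (0:ℝ) 1

/-- Lipschitz continuity of a graphon on [0,1]². -/
def GraphonLipschitz (W : ℝ → ℝ → ℝ) (L : ℝ) : Prop :=
  ∀ a b a' b' : ℝ, a ∈ Set.Icc (0:ℝ) 1 → b ∈ Set.Icc (0:ℝ) 1 → a' ∈ Set.Icc (0:ℝ) 1 →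
    b' ∈ Set.Icc (0:ℝ) 1 → |W a b - W a' b'| ≤ L * (|a - a'| + |b - b'|)

/-- The neighborhood mean field 𝔾^α = ∫₀¹ W(α,β) ν^β dβ of a state marginal ensemble ν. -/
noncomputable def nbhd [Fintype 𝒳] (W : ℝ → ℝ → ℝ) (ν : ℝ → 𝒳 → ℝ) (α : ℝ) : 𝒳 → ℝ :=
  fun x => ∫ β in Set.Ioc (0:ℝ) 1, W α β * ν β x

/-- 𝛍 = Ψ(𝛑): the (measurable) mean field ensemble generated by the policy ensemble 𝛑,
via μ^α_0 = μ₀ and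
μ^α_{t+1}(x') = Σ_{x,u} μ^α_t(x) π^α_t(u|x) P(x'|x,u,𝔾^α_t). -/
def IsMeanFieldOf [Fintype 𝒳] [Fintype 𝒰] (W : ℝ → ℝ → ℝ) (P : 𝒳 → 𝒰 → (𝒳 → ℝ) → 𝒳 → ℝ)
    (μ0 : 𝒳 → ℝ) (πe : ℝ → ℕ → 𝒳 → 𝒰 → ℝ) (μ : ℕ → ℝ → 𝒳 → ℝ) : Prop :=
  (∀ t x, Measurable fun α => μ t α x) ∧
  (∀ α ∈ Set.Icc (0:ℝ) 1, μ 0 α = μ0) ∧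
  ∀ t : ℕ, ∀ α ∈ Set.Icc (0:ℝ) 1, ∀ x' : 𝒳,
    μ (t+1) α x' = ∑ x, μ t α x * ∑ u, πe α t x u * P x u (nbhd W (μ t) α) x'

/-- The law of the state of a single mean field agent with neighborhood mean field
G and policy π: X_0 ∼ μ₀, U_t ∼ π_t(·|X_t), X_{t+1} ∼ P(·|X_t,U_t,G_t). -/
noncomputable def stateLaw [Fintype 𝒳] [Fintype 𝒰] (P : 𝒳 → 𝒰 → (𝒳 → ℝ) → 𝒳 → ℝ)
    (μ0 : 𝒳 → ℝ) (G : ℕ → 𝒳 → ℝ) (π : ℕ → 𝒳 → 𝒰 → ℝ) : ℕ → 𝒳 → ℝ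
  | 0 => μ0
  | (t+1) => fun x' => ∑ x, stateLaw P μ0 G π t x * ∑ u, π t x u * P x u (G t) x'

/-- Mean field objective J(π) = E[Σ_{t<T} r(X_t,U_t,G_t)] of a single agent whose
neighborhood mean field is G. -/
noncomputable def Jmf [Fintype 𝒳] [Fintype 𝒰] (T : ℕ) (r : 𝒳 → 𝒰 → (𝒳 → ℝ) → ℝ)
    (P : 𝒳 → 𝒰 → (𝒳 → ℝ) → 𝒳 → ℝ) (μ0 : 𝒳 → ℝ) (G : ℕ → 𝒳 → ℝ) (π : ℕ → 𝒳 → 𝒰 → ℝ) : ℝ :=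
  ∑ t ∈ Finset.range T, ∑ x, stateLaw P μ0 G π t x * ∑ u, π t x u * r x u (G t)

/-- A Graphon Mean Field Equilibrium: a measurable policy ensemble 𝛑 and mean field
ensemble 𝛍 with 𝛍 = Ψ(𝛑) and π^α optimal for J^𝛍_α for every α ∈ [0,1]. -/
def IsGMFE [Fintype 𝒳] [Fintype 𝒰] (T : ℕ) (W : ℝ → ℝ → ℝ) (P : 𝒳 → 𝒰 → (𝒳 → ℝ) → 𝒳 → ℝ)
    (r : 𝒳 → 𝒰 → (𝒳 → ℝ) → ℝ) (μ0 : 𝒳 → ℝ)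
    (πe : ℝ → ℕ → 𝒳 → 𝒰 → ℝ) (μ : ℕ → ℝ → 𝒳 → ℝ) : Prop :=
  (∀ t x u, Measurable fun α => πe α t x u) ∧
  (∀ α ∈ Set.Icc (0:ℝ) 1, IsPolicy (πe α)) ∧
  IsMeanFieldOf W P μ0 πe μ ∧
  ∀ α ∈ Set.Icc (0:ℝ) 1, ∀ π' : ℕ → 𝒳 → 𝒰 → ℝ, IsPolicy π' →
    Jmf T r P μ0 (fun t => nbhd W (μ t) α) π' ≤ Jmf T r P μ0 (fun t => nbhd W (μ t) α) (πe α)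

/-- α ↦ π^α is Lipschitz continuous up to a finite set D of discontinuities. -/
def EnsembleLipschitzUpTo [Fintype 𝒳] [Fintype 𝒰] (πe : ℝ → ℕ → 𝒳 → 𝒰 → ℝ) : Prop :=
  ∃ (L : ℝ) (D : Finset ℝ), ∀ (t : ℕ) (x : 𝒳) (u : 𝒰),
    ∀ α ∈ Set.Icc (0:ℝ) 1, ∀ β ∈ Set.Icc (0:ℝ) 1,
      (∀ d ∈ D, d ∉ Set.uIcc α β) → |πe α t x u - πe β t x u| ≤ L * |α - β|

/-- Edge indicators of a simple (undirected) graph. -/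
def IsEdgeWeights {N : ℕ} (ξ : Fin N → Fin N → ℝ) : Prop :=
  (∀ i j, ξ i j = 0 ∨ ξ i j = 1) ∧ ∀ i j, ξ i j = ξ j i

/-- Empirical neighborhood mean field 𝔾ⁱ = (1/N) Σ_j ξ_{ij} δ_{X^j}. -/
noncomputable def empNbhd [Fintype 𝒳] [DecidableEq 𝒳] {N : ℕ} (ξ : Fin N → Fin N → ℝ)
    (X : Fin N → 𝒳) (i : Fin N) : 𝒳 → ℝ :=
  fun x => (N : ℝ)⁻¹ * ∑ j, ξ i j * (if X j = x then 1 else 0)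

/-- The joint law of the N agents' states at time t: X^i_0 ∼ μ₀ i.i.d.,
U^i_t ∼ π^i_t(·|X^i_t), X^i_{t+1} ∼ P(·|X^i_t,U^i_t,𝔾^i_t) conditionally independently. -/
noncomputable def jointLaw [Fintype 𝒳] [DecidableEq 𝒳] [Fintype 𝒰] {N : ℕ}
    (P : 𝒳 → 𝒰 → (𝒳 → ℝ) → 𝒳 → ℝ) (μ0 : 𝒳 → ℝ) (ξ : Fin N → Fin N → ℝ)
    (πs : Fin N → ℕ → 𝒳 → 𝒰 → ℝ) : ℕ → (Fin N → 𝒳) → ℝ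
  | 0 => fun X => ∏ i, μ0 (X i)
  | (t+1) => fun Y => ∑ X : Fin N → 𝒳, jointLaw P μ0 ξ πs t X *
      ∏ i, ∑ u, πs i t (X i) u * P (X i) u (empNbhd ξ X i) (Y i)

/-- The objective J^N_i = E[Σ_{t<T} r(X^i_t,U^i_t,𝔾^i_t)] of agent i in the N-agent game. -/
noncomputable def JN [Fintype 𝒳] [DecidableEq 𝒳] [Fintype 𝒰] {N : ℕ} (T : ℕ)
    (r : 𝒳 → 𝒰 → (𝒳 → ℝ) → ℝ) (P : 𝒳 → 𝒰 → (𝒳 → ℝ) → 𝒳 → ℝ) (μ0 : 𝒳 → ℝ)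
    (ξ : Fin N → Fin N → ℝ) (πs : Fin N → ℕ → 𝒳 → 𝒰 → ℝ) (i : Fin N) : ℝ :=
  ∑ t ∈ Finset.range T, ∑ X : Fin N → 𝒳, jointLaw P μ0 ξ πs t X *
    ∑ u, πs i t (X i) u * r (X i) u (empNbhd ξ X i)

/-- Γ_N(𝛑) = (π^{1/N},…,π^{N/N}) (agent i : Fin N has graphon index (i+1)/N). -/
noncomputable def gammaN (πe : ℝ → ℕ → 𝒳 → 𝒰 → ℝ) (N : ℕ) : Fin N → ℕ → 𝒳 → 𝒰 → ℝ :=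
  fun i => πe ((((i : ℕ) : ℝ) + 1) / N)

/-- The step graphon W_N of a finite graph: W_N(x,y) = ξ_{⌈Nx⌉,⌈Ny⌉}. -/
noncomputable def stepGraphon {N : ℕ} (ξ : Fin N → Fin N → ℝ) : ℝ → ℝ → ℝ := fun a b =>
  ∑ i : Fin N, ∑ j : Fin N,
    (if ((i : ℕ) : ℝ) / N < a ∧ a ≤ (((i : ℕ) : ℝ) + 1) / N then 1 else 0) *
    (if ((j : ℕ) : ℝ) / N < b ∧ b ≤ (((j : ℕ) : ℝ) + 1) / N then 1 else 0) * ξ i j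

/-- Assumption (W): ‖W_N − W‖_{L∞→L1} → 0, i.e.
sup_{‖g‖∞ ≤ 1} ∫₀¹ |∫₀¹ (W_N(α,β) − W(α,β)) g(β) dβ| dα → 0. -/
def OpConvergesTo (WN : (N : ℕ) → ℝ → ℝ → ℝ) (W : ℝ → ℝ → ℝ) : Prop :=
  ∀ ε > (0:ℝ), ∃ N₀ : ℕ, ∀ N ≥ N₀, ∀ g : ℝ → ℝ, Measurable g → (∀ β, |g β| ≤ 1) →
    (∫ α in Set.Ioc (0:ℝ) 1, |∫ β in Set.Ioc (0:ℝ) 1, (WN N α β - W α β) * g β|) ≤ ε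

/-- ‖W_N − W‖_{L∞→L1} = O(1/√N). -/
def OpRateSqrt (WN : (N : ℕ) → ℝ → ℝ → ℝ) (W : ℝ → ℝ → ℝ) : Prop :=
  ∃ C : ℝ, ∀ N : ℕ, 1 ≤ N → ∀ g : ℝ → ℝ, Measurable g → (∀ β, |g β| ≤ 1) →
    (∫ α in Set.Ioc (0:ℝ) 1, |∫ β in Set.Ioc (0:ℝ) 1, (WN N α β - W α β) * g β|) ≤ C / Real.sqrt N

/-- 𝛍^N_t(f) = ∫₀¹ f(X^{⌈Nα⌉}, α) dα, the integral of f against the random empirical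
step measure ensemble. -/
noncomputable def empInt [Fintype 𝒳] {N : ℕ} (f : 𝒳 → ℝ → ℝ) (X : Fin N → 𝒳) : ℝ :=
  ∑ i : Fin N, ∫ α in Set.Ioc (((i : ℕ) : ℝ) / N) ((((i : ℕ) : ℝ) + 1) / N), f (X i) α

/-- 𝛍_t(f) = ∫₀¹ Σ_x f(x,α) μ^α_t(x) dα. -/
noncomputable def mfInt [Fintype 𝒳] (f : 𝒳 → ℝ → ℝ) (ν : ℝ → 𝒳 → ℝ) : ℝ :=
  ∫ α in Set.Ioc (0:ℝ) 1, ∑ x, f x α * ν α x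

/-- The representative α_m = (m+1)/M of the m-th equivalence class Ĩ_m = (m/M,(m+1)/M]. -/
noncomputable def rep (M : ℕ) (m : Fin M) : ℝ := (((m : ℕ) : ℝ) + 1) / M

/-- Discretized neighborhood mean field 𝔾̂^{α_m} = (1/M) Σ_n W(α_m,α_n) ν^{α_n}. -/
noncomputable def approxNbhd [Fintype 𝒳] {M : ℕ} (W : ℝ → ℝ → ℝ) (ν : Fin M → 𝒳 → ℝ)
    (m : Fin M) : 𝒳 → ℝ :=
  fun x => (M : ℝ)⁻¹ * ∑ n, W (rep M m) (rep M n) * ν n x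

/-- The approximate mean field μ̂ = Ψ̂(𝛑) of the M equivalence classes method. -/
noncomputable def approxMF [Fintype 𝒳] [Fintype 𝒰] {M : ℕ} (W : ℝ → ℝ → ℝ)
    (P : 𝒳 → 𝒰 → (𝒳 → ℝ) → 𝒳 → ℝ) (μ0 : 𝒳 → ℝ) (πm : Fin M → ℕ → 𝒳 → 𝒰 → ℝ) :
    ℕ → Fin M → 𝒳 → ℝ
  | 0 => fun _ => μ0
  | (t+1) => fun m x' => ∑ x, approxMF W P μ0 πm t m x *
      ∑ u, πm m t x u * P x u (approxNbhd W (approxMF W P μ0 πm t) m) x'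

/-- A solution (𝛑, 𝛍) of the M equivalence classes method: 𝛑 is determined by policies
π^{α_m} (one per class), each optimal for the generated approximate mean field 𝛍 = Ψ̂(𝛑). -/
def IsEqClassSolution [Fintype 𝒳] [Fintype 𝒰] (T : ℕ) {M : ℕ} (W : ℝ → ℝ → ℝ)
    (P : 𝒳 → 𝒰 → (𝒳 → ℝ) → 𝒳 → ℝ) (r : 𝒳 → 𝒰 → (𝒳 → ℝ) → ℝ) (μ0 : 𝒳 → ℝ)
    (πm : Fin M → ℕ → 𝒳 → 𝒰 → ℝ) : Prop :=
  (∀ m, IsPolicy (πm m)) ∧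
  ∀ m, ∀ π' : ℕ → 𝒳 → 𝒰 → ℝ, IsPolicy π' →
    Jmf T r P μ0 (fun t => approxNbhd W (approxMF W P μ0 πm t) m) π'
      ≤ Jmf T r P μ0 (fun t => approxNbhd W (approxMF W P μ0 πm t) m) (πm m)

/-- The optimal action value function Q with k steps to go from time t,
Q(t,x,u) = r(x,u,G_t) + Σ_{x'} P(x'|x,u,G_t) max_{u'} Q(t+1,x',u'). -/
noncomputable def Qfun [Fintype 𝒳] [Fintype 𝒰] [Nonempty 𝒰] (r : 𝒳 → 𝒰 → (𝒳 → ℝ) → ℝ)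
    (P : 𝒳 → 𝒰 → (𝒳 → ℝ) → 𝒳 → ℝ) (G : ℕ → 𝒳 → ℝ) : ℕ → ℕ → 𝒳 → 𝒰 → ℝ
  | 0 => fun _ _ _ => 0
  | (k+1) => fun t x u => r x u (G t) + ∑ x', P x u (G t) x' *
      Finset.univ.sup' Finset.univ_nonempty (fun u' => Qfun r P G k (t+1) x' u')

/-- The Boltzmann (softmax) policy Φ̂_η(𝛍) of the M equivalence classes method with
horizon T, temperature η and block mean field ν. -/
noncomputable def boltzmann [Fintype 𝒳] [Fintype 𝒰] [Nonempty 𝒰] (T : ℕ) (η : ℝ)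
    (r : 𝒳 → 𝒰 → (𝒳 → ℝ) → ℝ) (P : 𝒳 → 𝒰 → (𝒳 → ℝ) → 𝒳 → ℝ) (W : ℝ → ℝ → ℝ) {M : ℕ}
    (ν : ℕ → Fin M → 𝒳 → ℝ) : Fin M → ℕ → 𝒳 → 𝒰 → ℝ :=
  fun m t x u =>
    Real.exp (Qfun r P (fun s => approxNbhd W (ν s) m) (T - t) t x u / η) /
      ∑ u' : 𝒰, Real.exp (Qfun r P (fun s => approxNbhd W (ν s) m) (T - t) t x u' / η)

/-- One step 𝛍 ↦ Ψ̂(Φ̂_η(𝛍)) of the Boltzmann fixed point iteration. -/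
noncomputable def boltzIter [Fintype 𝒳] [Fintype 𝒰] [Nonempty 𝒰] (T : ℕ) (η : ℝ)
    (r : 𝒳 → 𝒰 → (𝒳 → ℝ) → ℝ) (P : 𝒳 → 𝒰 → (𝒳 → ℝ) → 𝒳 → ℝ) (W : ℝ → ℝ → ℝ) (μ0 : 𝒳 → ℝ)
    {M : ℕ} (ν : ℕ → Fin M → 𝒳 → ℝ) : ℕ → Fin M → 𝒳 → ℝ :=
  fun t => approxMF W P μ0 (boltzmann T η r P W ν) t


/-! ### Helper lemmas -/

lemma sum_prod_pi {𝒳 : Type*} [Fintype 𝒳] {N : ℕ} (h : Fin N → 𝒳 → ℝ) :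
    ∑ Y : Fin N → 𝒳, ∏ k, h k (Y k) = ∏ k, ∑ x, h k x := by
  classical
  rw [Finset.prod_univ_sum, Fintype.piFinset_univ]

lemma expect_abs_le {ι : Type*} [Fintype ι] (p S : ι → ℝ) (hp : ∀ i, 0 ≤ p i)
    (hp1 : ∑ i, p i = 1) (V : ℝ) (hV : ∑ i, p i * S i ^ 2 ≤ V) :
    ∑ i, p i * |S i| ≤ Real.sqrt V := by
  apply Real.le_sqrt_of_sq_le
  refine le_trans ?_ hV
  have h := Finset.sum_mul_sq_le_sq_mul_sq Finset.univ (fun i => Real.sqrt (p i))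
    (fun i => Real.sqrt (p i) * |S i|)
  have e1 : ∀ i, Real.sqrt (p i) * (Real.sqrt (p i) * |S i|) = p i * |S i| := fun i => by
    rw [← mul_assoc, Real.mul_self_sqrt (hp i)]
  have e2 : ∀ i, Real.sqrt (p i) ^ 2 = p i := fun i => Real.sq_sqrt (hp i)
  have e3 : ∀ i, (Real.sqrt (p i) * |S i|) ^ 2 = p i * S i ^ 2 := fun i => by
    rw [mul_pow, Real.sq_sqrt (hp i), sq_abs]
  simp only [e1, e2, e3, hp1, one_mul] at h
  exact h

lemma prod_law_prob {𝒳 : Type*} [Fintype 𝒳] {N : ℕ} (q : Fin N → 𝒳 → ℝ)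
    (hq : ∀ i, q i ∈ simplex 𝒳) :
    (∀ Y : Fin N → 𝒳, 0 ≤ ∏ k, q k (Y k)) ∧ ∑ Y : Fin N → 𝒳, ∏ k, q k (Y k) = 1 := by
  refine ⟨fun Y => Finset.prod_nonneg fun k _ => (hq k).1 _, ?_⟩
  rw [sum_prod_pi]
  exact Finset.prod_eq_one fun k _ => (hq k).2

lemma prod_law_cross {𝒳 : Type*} [Fintype 𝒳] {N : ℕ} (q : Fin N → 𝒳 → ℝ)
    (w : Fin N → 𝒳 → ℝ) (hw : ∀ i, ∑ x, q i x * w i x = 0) (i j : Fin N) (hij : i ≠ j) :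
    ∑ Y : Fin N → 𝒳, (∏ k, q k (Y k)) * (w i (Y i) * w j (Y j)) = 0 := by
  have h : ∀ Y : Fin N → 𝒳, (∏ k, q k (Y k)) * (w i (Y i) * w j (Y j)) =
      ∏ k, (q k (Y k) * ((if k = i then w k (Y k) else 1) * (if k = j then w k (Y k) else 1))) := by
    intro Y
    rw [Finset.prod_mul_distrib, Finset.prod_mul_distrib]
    simp
  simp only [h]
  rw [sum_prod_pi (fun k x => q k x * ((if k = i then w k x else 1) * (if k = j then w k x else 1)))]
  apply Finset.prod_eq_zero (Finset.mem_univ i)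
  simpa [hij] using hw i

lemma prod_law_conc {𝒳 : Type*} [Fintype 𝒳] {N : ℕ} (q : Fin N → 𝒳 → ℝ)
    (hq : ∀ i, q i ∈ simplex 𝒳) (z : Fin N → 𝒳 → ℝ) (c : ℝ) (hz : ∀ i x, |z i x| ≤ c) :
    ∑ Y : Fin N → 𝒳, (∏ k, q k (Y k)) * |∑ i, z i (Y i) - ∑ i, ∑ x, q i x * z i x|
      ≤ Real.sqrt (N * (2 * c) ^ 2) := by
  obtain ⟨hp, hp1⟩ := prod_law_prob q hq
  apply expect_abs_le (fun Y : Fin N → 𝒳 => ∏ k, q k (Y k))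
    (fun Y => ∑ i, z i (Y i) - ∑ i, ∑ x, q i x * z i x) hp hp1
  set w : Fin N → 𝒳 → ℝ := fun i x => z i x - ∑ y, q i y * z i y with hwdef
  have hw0 : ∀ i, ∑ x, q i x * w i x = 0 := by
    intro i
    simp only [hwdef, mul_sub, Finset.sum_sub_distrib]
    rw [← Finset.sum_mul, (hq i).2]; ring
  have hwb : ∀ i x, w i x ^ 2 ≤ (2 * c) ^ 2 := by
    intro i x
    have h1 : |∑ y, q i y * z i y| ≤ c := by
      calc |∑ y, q i y * z i y| ≤ ∑ y, |q i y * z i y| := Finset.abs_sum_le_sum_abs _ _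
        _ ≤ ∑ y, q i y * c := Finset.sum_le_sum fun y _ => by
            rw [abs_mul, abs_of_nonneg ((hq i).1 y)]
            exact mul_le_mul_of_nonneg_left (hz i y) ((hq i).1 y)
        _ = c := by rw [← Finset.sum_mul, (hq i).2, one_mul]
    have h2 : |w i x| ≤ 2 * c := by
      have := abs_sub (z i x) (∑ y, q i y * z i y)
      have := hz i x
      simp only [hwdef]; linarith
    exact sq_le_sq' (by linarith [neg_abs_le (w i x)]) (by linarith [le_abs_self (w i x)])
  have hS : ∀ Y : Fin N → 𝒳, (∑ i, z i (Y i) - ∑ i, ∑ x, q i x * z i x) ^ 2 =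
      ∑ i, ∑ j, w i (Y i) * w j (Y j) := by
    intro Y
    rw [← Finset.sum_sub_distrib, sq, Finset.sum_mul_sum]
  simp only [hS, Finset.mul_sum]
  rw [Finset.sum_comm]
  calc ∑ i, ∑ Y : Fin N → 𝒳, ∑ j, (∏ k, q k (Y k)) * (w i (Y i) * w j (Y j))
      = ∑ i, ∑ j, ∑ Y : Fin N → 𝒳, (∏ k, q k (Y k)) * (w i (Y i) * w j (Y j)) :=
        Finset.sum_congr rfl fun i _ => Finset.sum_comm
    _ = ∑ i, ∑ Y : Fin N → 𝒳, (∏ k, q k (Y k)) * (w i (Y i) * w i (Y i)) := by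
        refine Finset.sum_congr rfl fun i _ => ?_
        exact Finset.sum_eq_single i
          (fun j _ hj => prod_law_cross q w hw0 i j hj.symm) (fun h => absurd (Finset.mem_univ _) h)
    _ ≤ ∑ i : Fin N, (2 * c) ^ 2 := by
        refine Finset.sum_le_sum fun i _ => ?_
        calc ∑ Y : Fin N → 𝒳, (∏ k, q k (Y k)) * (w i (Y i) * w i (Y i))
            ≤ ∑ Y : Fin N → 𝒳, (∏ k, q k (Y k)) * (2 * c) ^ 2 :=
              Finset.sum_le_sum fun Y _ => mul_le_mul_of_nonneg_left
                (by rw [← sq]; exact hwb i _) (hp Y)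
          _ = _ := by rw [← Finset.sum_mul, hp1, one_mul]
    _ = _ := by simp

lemma mix_simplex {𝒳 𝒰 : Type*} [Fintype 𝒳] [Fintype 𝒰] (a : 𝒰 → ℝ) (ha : ∀ u, 0 ≤ a u)
    (ha1 : ∑ u, a u = 1) (Q : 𝒰 → 𝒳 → ℝ) (hQ : ∀ u, Q u ∈ simplex 𝒳) :
    (fun x => ∑ u, a u * Q u x) ∈ simplex 𝒳 := by
  refine ⟨fun x => Finset.sum_nonneg fun u _ => mul_nonneg (ha u) ((hQ u).1 x), ?_⟩
  rw [Finset.sum_comm]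
  simp only [← Finset.mul_sum, (hQ _).2, mul_one, ha1]

lemma emp_subProb {𝒳 : Type*} [Fintype 𝒳] [DecidableEq 𝒳] {N : ℕ}
    (ξ : Fin N → Fin N → ℝ) (hξ : IsEdgeWeights ξ) (X : Fin N → 𝒳) (i : Fin N) :
    empNbhd ξ X i ∈ subProb 𝒳 := by
  have h0 : ∀ i j, 0 ≤ ξ i j := fun i j => by rcases hξ.1 i j with h | h <;> simp [h]
  have h1 : ∀ i j, ξ i j ≤ 1 := fun i j => by rcases hξ.1 i j with h | h <;> simp [h]
  refine ⟨fun x => ?_, ?_⟩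
  · unfold empNbhd
    refine mul_nonneg (by positivity) (Finset.sum_nonneg fun j _ => mul_nonneg (h0 i j) ?_)
    split_ifs <;> norm_num
  · unfold empNbhd
    rw [← Finset.mul_sum, Finset.sum_comm]
    simp only [← Finset.mul_sum, Finset.sum_ite_eq, Finset.mem_univ, if_true, mul_one]
    have hN : (0:ℝ) < N := by exact_mod_cast i.pos
    rw [inv_mul_le_iff₀ hN]
    calc ∑ j, ξ i j ≤ ∑ j : Fin N, (1:ℝ) := Finset.sum_le_sum fun j _ => h1 i j
      _ = N * 1 := by simp

lemma stepKer_simplex {𝒳 𝒰 : Type*} [Fintype 𝒳] [DecidableEq 𝒳] [Fintype 𝒰] {N : ℕ}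
    (P : 𝒳 → 𝒰 → (𝒳 → ℝ) → 𝒳 → ℝ) (hP : IsKernel P)
    (ξ : Fin N → Fin N → ℝ) (hξ : IsEdgeWeights ξ)
    (πs : Fin N → ℕ → 𝒳 → 𝒰 → ℝ) (hπs : ∀ i, IsPolicy (πs i)) (t : ℕ) (X : Fin N → 𝒳) (i : Fin N) :
    (fun y => ∑ u, πs i t (X i) u * P (X i) u (empNbhd ξ X i) y) ∈ simplex 𝒳 :=
  mix_simplex _ (hπs i t (X i)).1 (hπs i t (X i)).2 _ fun _ => hP _ _ _ (emp_subProb ξ hξ X i)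

lemma jointLaw_prob {𝒳 𝒰 : Type*} [Fintype 𝒳] [DecidableEq 𝒳] [Fintype 𝒰] {N : ℕ}
    (P : 𝒳 → 𝒰 → (𝒳 → ℝ) → 𝒳 → ℝ) (hP : IsKernel P) (μ0 : 𝒳 → ℝ) (hμ0 : μ0 ∈ simplex 𝒳)
    (ξ : Fin N → Fin N → ℝ) (hξ : IsEdgeWeights ξ)
    (πs : Fin N → ℕ → 𝒳 → 𝒰 → ℝ) (hπs : ∀ i, IsPolicy (πs i)) (t : ℕ) :
    (∀ X, 0 ≤ jointLaw P μ0 ξ πs t X) ∧ ∑ X, jointLaw P μ0 ξ πs t X = 1 := by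
  induction t with
  | zero => exact prod_law_prob (fun _ => μ0) (fun _ => hμ0)
  | succ t ih =>
    have hq := fun X => prod_law_prob _ (stepKer_simplex P hP ξ hξ πs hπs t X)
    refine ⟨fun Y => ?_, ?_⟩
    · exact Finset.sum_nonneg fun X _ => mul_nonneg (ih.1 X) ((hq X).1 Y)
    · simp only [jointLaw]
      rw [Finset.sum_comm]
      simp only [← Finset.mul_sum]
      calc _ = ∑ X, jointLaw P μ0 ξ πs t X * 1 :=
            Finset.sum_congr rfl fun X _ => by rw [(hq X).2]
        _ = 1 := by simpa using ih.2

lemma jointLaw_succ_expect {𝒳 𝒰 : Type*} [Fintype 𝒳] [DecidableEq 𝒳] [Fintype 𝒰] {N : ℕ}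
    (P : 𝒳 → 𝒰 → (𝒳 → ℝ) → 𝒳 → ℝ) (μ0 : 𝒳 → ℝ) (ξ : Fin N → Fin N → ℝ)
    (πs : Fin N → ℕ → 𝒳 → 𝒰 → ℝ) (t : ℕ) (F : (Fin N → 𝒳) → ℝ) :
    ∑ Y, jointLaw P μ0 ξ πs (t+1) Y * F Y = ∑ X, jointLaw P μ0 ξ πs t X *
      ∑ Y : Fin N → 𝒳, (∏ i, ∑ u, πs i t (X i) u * P (X i) u (empNbhd ξ X i) (Y i)) * F Y := by
  simp only [jointLaw, Finset.sum_mul, Finset.mul_sum]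
  rw [Finset.sum_comm]
  simp only [mul_assoc]

/-! ### The index map -/

/-- The block index of a graphon index. -/
noncomputable def idx (N : ℕ) (hN : 0 < N) (α : ℝ) : Fin N :=
  ⟨min (⌈(N:ℝ) * α⌉₊ - 1) (N - 1), by omega⟩

lemma idx_eq (N : ℕ) (hN : 0 < N) (i : Fin N) (α : ℝ)
    (h : α ∈ Set.Ioc (((i : ℕ) : ℝ) / N) ((((i : ℕ) : ℝ) + 1) / N)) : idx N hN α = i := by
  have hN' : (0:ℝ) < N := by exact_mod_cast hN
  have h1 : ((i:ℕ):ℝ) < N * α := by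
    have := h.1; rw [div_lt_iff₀ hN'] at this; linarith
  have h2 : N * α ≤ ((i:ℕ):ℝ) + 1 := by
    have := h.2; rw [le_div_iff₀ hN'] at this; linarith
  have h3 : ⌈(N:ℝ) * α⌉₊ = i + 1 := by
    rw [Nat.ceil_eq_iff (by omega)]
    push_cast
    simp [h1, h2]
  ext
  simp only [idx, h3]
  omega

lemma mem_bin_idx (N : ℕ) (hN : 0 < N) (α : ℝ) (h : α ∈ Set.Ioc (0:ℝ) 1) :
    α ∈ Set.Ioc (((idx N hN α : ℕ) : ℝ) / N) ((((idx N hN α : ℕ) : ℝ) + 1) / N) := by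
  have hN' : (0:ℝ) < N := by exact_mod_cast hN
  have hp : 0 < (N:ℝ) * α := mul_pos hN' h.1
  have hk : 0 < ⌈(N:ℝ) * α⌉₊ := Nat.ceil_pos.2 hp
  have hk2 : ⌈(N:ℝ) * α⌉₊ ≤ N := Nat.ceil_le.2 (by nlinarith [h.2])
  obtain ⟨k, hk'⟩ : ∃ k, ⌈(N:ℝ) * α⌉₊ = k + 1 := ⟨_, (Nat.succ_pred_eq_of_pos hk).symm⟩
  have hi : (idx N hN α : ℕ) = k := by simp only [idx, hk']; omega
  rw [hi]
  rw [Nat.ceil_eq_iff (by omega)] at hk'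
  obtain ⟨a, b⟩ := hk'
  push_cast at a b
  refine ⟨?_, ?_⟩
  · rw [div_lt_iff₀ hN']; linarith
  · rw [le_div_iff₀ hN']; linarith

lemma measurable_idx (N : ℕ) (hN : 0 < N) : Measurable (idx N hN) := by
  have : Measurable fun α : ℝ => ⌈(N:ℝ) * α⌉₊ := (Nat.measurable_ceil).comp (measurable_const_mul _)
  have h2 : Measurable fun k : ℕ => (⟨min (k - 1) (N - 1), by omega⟩ : Fin N) :=
    measurable_from_top
  exact h2.comp this

lemma measurable_idx_comp (N : ℕ) (hN : 0 < N) (F : Fin N → ℝ → ℝ) (hF : ∀ i, Measurable (F i)) :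
    Measurable fun α => F (idx N hN α) α := by
  have h : (fun α => F (idx N hN α) α) = fun α => ∑ i, if idx N hN α = i then F i α else 0 := by
    funext α; simp
  rw [h]
  refine Finset.measurable_sum _ fun i _ => Measurable.ite ?_ (hF i) measurable_const
  exact measurable_idx N hN (measurableSet_singleton i)

lemma intb {h : ℝ → ℝ} (hm : Measurable h) {C : ℝ} (hb : ∀ α ∈ Set.Ioc (0:ℝ) 1, |h α| ≤ C) :
    IntegrableOn h (Set.Ioc (0:ℝ) 1) := by
  refine Measure.integrableOn_of_bounded (M := C) (by simp) hm.aestronglyMeasurable ?_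
  exact (ae_restrict_iff' measurableSet_Ioc).2 (Eventually.of_forall hb)

lemma bin_subset (N : ℕ) (i : Fin N) :
    Set.Ioc (((i : ℕ) : ℝ) / N) ((((i : ℕ) : ℝ) + 1) / N) ⊆ Set.Ioc (0:ℝ) 1 := by
  have hN' : (0:ℝ) < N := by exact_mod_cast i.pos
  have hi : ((i:ℕ):ℝ) + 1 ≤ N := by exact_mod_cast i.isLt
  intro α h
  refine ⟨lt_of_le_of_lt (by positivity) h.1, h.2.trans ?_⟩
  rwa [div_le_one hN']

lemma integral_idx (N : ℕ) (hN : 0 < N) (F : Fin N → ℝ → ℝ) (hF : ∀ i, Measurable (F i)) (C : ℝ)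
    (hb : ∀ i, ∀ α ∈ Set.Ioc (0:ℝ) 1, |F i α| ≤ C) :
    ∫ α in Set.Ioc (0:ℝ) 1, F (idx N hN α) α =
      ∑ i : Fin N, ∫ α in Set.Ioc (((i : ℕ) : ℝ) / N) ((((i : ℕ) : ℝ) + 1) / N), F i α := by
  have hU : Set.Ioc (0:ℝ) 1 =
      ⋃ i : Fin N, Set.Ioc (((i : ℕ) : ℝ) / N) ((((i : ℕ) : ℝ) + 1) / N) := by
    ext α
    simp only [Set.mem_iUnion]
    exact ⟨fun h => ⟨_, mem_bin_idx N hN α h⟩, fun ⟨i, h⟩ => bin_subset N i h⟩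
  have h_intg : IntegrableOn (fun α => F (idx N hN α) α) (Set.Ioc (0:ℝ) 1) :=
    intb (measurable_idx_comp N hN F hF) fun α h => hb _ α h
  conv_lhs => rw [hU]
  rw [integral_iUnion_fintype (fun i => measurableSet_Ioc)]
  · refine Finset.sum_congr rfl fun i _ => setIntegral_congr_fun measurableSet_Ioc fun α h => ?_
    simp only [idx_eq N hN i α h]
  · intro i j hij
    refine Set.disjoint_left.2 fun α hi hj => hij ?_
    rw [← idx_eq N hN i α hi, ← idx_eq N hN j α hj]
  · exact fun i => h_intg.mono_set (bin_subset N i)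

lemma bin_volume (N : ℕ) (i : Fin N) :
    (∫ _ in Set.Ioc (((i : ℕ) : ℝ) / N) ((((i : ℕ) : ℝ) + 1) / N), (1:ℝ)) = (N:ℝ)⁻¹ := by
  have hN' : (0:ℝ) < N := by exact_mod_cast i.pos
  have : (((i : ℕ) : ℝ) + 1) / N - ((i : ℕ) : ℝ) / N = (N:ℝ)⁻¹ := by field_simp; ring
  simp [Measure.real, Real.volume_Ioc, this]

lemma abs_bin_integral_le (N : ℕ) (i : Fin N) (h : ℝ → ℝ) (hb : ∀ α, |h α| ≤ 1) :
    |∫ α in Set.Ioc (((i : ℕ) : ℝ) / N) ((((i : ℕ) : ℝ) + 1) / N), h α| ≤ (N:ℝ)⁻¹ := by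
  rw [← bin_volume N i]
  exact norm_integral_le_of_norm_le (f := h) (g := fun _ => (1:ℝ))
    (integrableOn_const (by simp)) (Eventually.of_forall hb)

lemma integral_idx_indicator (N : ℕ) (hN : 0 < N) (j : Fin N) :
    ∫ α in Set.Ioc (0:ℝ) 1, (if idx N hN α = j then (1:ℝ) else 0) = (N:ℝ)⁻¹ := by
  rw [integral_idx N hN (fun i _ => if i = j then (1:ℝ) else 0) (fun i => measurable_const) 1
    (fun i α _ => by split_ifs <;> simp)]
  rw [Finset.sum_eq_single j]
  · simp only [if_true]; exact bin_volume N j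
  · intro i _ hij; simp [hij]
  · simp

lemma step_eq {N : ℕ} (hN : 0 < N) (ξ : Fin N → Fin N → ℝ) (a b : ℝ)
    (ha : a ∈ Set.Ioc (0:ℝ) 1) (hb : b ∈ Set.Ioc (0:ℝ) 1) :
    stepGraphon ξ a b = ξ (idx N hN a) (idx N hN b) := by
  have key : ∀ c ∈ Set.Ioc (0:ℝ) 1, ∀ i : Fin N,
      (((i : ℕ) : ℝ) / N < c ∧ c ≤ (((i : ℕ) : ℝ) + 1) / N) ↔ i = idx N hN c := by
    intro c hc i
    constructor
    · intro h; exact (idx_eq N hN i c h).symm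
    · intro h; rw [h]; exact mem_bin_idx N hN c hc
  unfold stepGraphon
  simp only [key a ha, key b hb]
  simp

lemma empInt_eq {𝒳 : Type*} [Fintype 𝒳] {N : ℕ} (hN : 0 < N) (f : 𝒳 → ℝ → ℝ)
    (hf : ∀ x, Measurable (f x)) (hb : ∀ x α, |f x α| ≤ 1) (X : Fin N → 𝒳) :
    empInt f X = ∫ α in Set.Ioc (0:ℝ) 1, f (X (idx N hN α)) α := by
  rw [integral_idx N hN (fun i α => f (X i) α) (fun i => hf _) 1 (fun i α _ => hb _ α)]
  rfl

lemma empNbhd_eq {𝒳 : Type*} [Fintype 𝒳] [DecidableEq 𝒳] {N : ℕ} (hN : 0 < N)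
    (ξ : Fin N → Fin N → ℝ) (hξ : IsEdgeWeights ξ) (X : Fin N → 𝒳) (a : ℝ)
    (ha : a ∈ Set.Ioc (0:ℝ) 1) (x : 𝒳) :
    empNbhd ξ X (idx N hN a) x =
      ∫ β in Set.Ioc (0:ℝ) 1, stepGraphon ξ a β * (if X (idx N hN β) = x then 1 else 0) := by
  have h1 : ∫ β in Set.Ioc (0:ℝ) 1, stepGraphon ξ a β * (if X (idx N hN β) = x then 1 else 0) =
      ∫ β in Set.Ioc (0:ℝ) 1,
        ξ (idx N hN a) (idx N hN β) * (if X (idx N hN β) = x then 1 else 0) :=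
    setIntegral_congr_fun measurableSet_Ioc fun β hβ => by
      simp only [step_eq hN ξ a β ha hβ]
  rw [h1, integral_idx N hN
    (fun i _ => ξ (idx N hN a) i * (if X i = x then 1 else 0)) (fun i => measurable_const) 1]
  · unfold empNbhd
    rw [Finset.mul_sum]
    refine Finset.sum_congr rfl fun i _ => ?_
    have := bin_volume N i
    rw [← mul_one (ξ (idx N hN a) i * (if X i = x then 1 else 0)), integral_const_mul, this]
    ring
  · intro i α _
    rcases hξ.1 (idx N hN a) i with h | h <;> rw [h] <;> split_ifs <;> simp

/-! ### Measurability and mean field regularity -/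

lemma nbhd_subProb {𝒳 : Type*} [Fintype 𝒳] (W : ℝ → ℝ → ℝ) (hW : IsGraphon W)
    (ν : ℝ → 𝒳 → ℝ) (hνm : ∀ x, Measurable fun α => ν α x)
    (hν : ∀ α ∈ Set.Ioc (0:ℝ) 1, ν α ∈ simplex 𝒳) (α : ℝ) : nbhd W ν α ∈ subProb 𝒳 := by
  have hWm : Measurable (W α) := hW.1.comp (measurable_const.prodMk measurable_id)
  have hle : ∀ β ∈ Set.Ioc (0:ℝ) 1, ∀ x, ν β x ≤ 1 := fun β hβ x => by
    rw [← (hν β hβ).2]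
    exact Finset.single_le_sum (f := ν β) (fun y _ => (hν β hβ).1 y) (Finset.mem_univ x)
  have h_intg : ∀ x, IntegrableOn (fun β => W α β * ν β x) (Set.Ioc (0:ℝ) 1) := fun x =>
    intb (C := 1) (hWm.mul (hνm x)) fun β hβ => by
      rw [abs_of_nonneg (mul_nonneg (hW.2.2 α β).1 ((hν β hβ).1 x))]
      exact mul_le_one₀ (hW.2.2 α β).2 ((hν β hβ).1 x) (hle β hβ x)
  refine ⟨fun x => ?_, ?_⟩
  · exact setIntegral_nonneg measurableSet_Ioc fun β hβ =>
      mul_nonneg (hW.2.2 α β).1 ((hν β hβ).1 x)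
  · simp only [nbhd]
    rw [← integral_finsetSum _ fun x _ => h_intg x]
    calc ∫ β in Set.Ioc (0:ℝ) 1, ∑ x, W α β * ν β x
        ≤ ∫ β in Set.Ioc (0:ℝ) 1, (1:ℝ) := by
          refine setIntegral_mono_on (integrable_finsetSum _ fun x _ => h_intg x)
            (integrableOn_const (by simp)) measurableSet_Ioc fun β hβ => ?_
          rw [← Finset.mul_sum, (hν β hβ).2, mul_one]
          exact (hW.2.2 α β).2
      _ = 1 := by simp

lemma nbhd_measurable {𝒳 : Type*} [Fintype 𝒳] (W : ℝ → ℝ → ℝ) (hW : IsGraphon W)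
    (ν : ℝ → 𝒳 → ℝ) (hνm : ∀ x, Measurable fun α => ν α x) (x : 𝒳) :
    Measurable fun α => nbhd W ν α x := by
  have h : StronglyMeasurable (Function.uncurry fun α β => W α β * ν β x) := by
    apply Measurable.stronglyMeasurable
    exact hW.1.mul ((hνm x).comp measurable_snd)
  exact (h.integral_prod_right (ν := volume.restrict (Set.Ioc (0:ℝ) 1))).measurable

lemma kernel_measurable {𝒳 𝒰 : Type*} [Fintype 𝒳] [Fintype 𝒰]
    (P : 𝒳 → 𝒰 → (𝒳 → ℝ) → 𝒳 → ℝ) (L : ℝ) (hL : KernelLipschitz P L)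
    (G : ℝ → 𝒳 → ℝ) (hG : ∀ x, Measurable fun α => G α x) (hGs : ∀ α, G α ∈ subProb 𝒳)
    (x : 𝒳) (u : 𝒰) (y : 𝒳) : Measurable fun α => P x u (G α) y := by
  have hc : Continuous fun ν : subProb 𝒳 => P x u ν.1 y := by
    rw [continuous_iff_continuousAt]
    intro ν0
    rw [ContinuousAt, tendsto_iff_dist_tendsto_zero]
    have h0 : Tendsto (fun ν : subProb 𝒳 => L * l1dist ν.1 ν0.1) (nhds ν0) (nhds 0) := by
      have : Continuous fun ν : subProb 𝒳 => L * l1dist ν.1 ν0.1 := by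
        unfold l1dist
        exact continuous_const.mul (continuous_finsetSum _ fun y _ =>
          (((continuous_apply y).comp continuous_subtype_val).sub continuous_const).abs)
      have h := this.tendsto ν0
      simpa [l1dist] using h
    refine squeeze_zero (fun _ => dist_nonneg) (fun ν => ?_) h0
    refine le_trans ?_ (hL x u ν.1 ν0.1 ν.2 ν0.2)
    rw [Real.dist_eq]
    exact Finset.single_le_sum (f := fun z => |P x u ν.1 z - P x u ν0.1 z|)
      (fun z _ => abs_nonneg _) (Finset.mem_univ y)
  have hm : Measurable fun α => (⟨G α, hGs α⟩ : subProb 𝒳) :=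
    (measurable_pi_lambda _ hG).subtype_mk
  exact hc.measurable.comp hm

lemma mf_simplex {𝒳 𝒰 : Type*} [Fintype 𝒳] [Fintype 𝒰] (W : ℝ → ℝ → ℝ) (hW : IsGraphon W)
    (P : 𝒳 → 𝒰 → (𝒳 → ℝ) → 𝒳 → ℝ) (hP : IsKernel P) (μ0 : 𝒳 → ℝ) (hμ0 : μ0 ∈ simplex 𝒳)
    (πe : ℝ → ℕ → 𝒳 → 𝒰 → ℝ) (hπe : ∀ α ∈ Set.Icc (0:ℝ) 1, IsPolicy (πe α))
    (μ : ℕ → ℝ → 𝒳 → ℝ) (hμ : IsMeanFieldOf W P μ0 πe μ) (t : ℕ) :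
    ∀ α ∈ Set.Icc (0:ℝ) 1, μ t α ∈ simplex 𝒳 := by
  induction t with
  | zero => intro α hα; rw [hμ.2.1 α hα]; exact hμ0
  | succ t ih =>
    intro α hα
    have h : μ (t+1) α = fun x' => ∑ x, μ t α x *
        ∑ u, πe α t x u * P x u (nbhd W (μ t) α) x' := funext (hμ.2.2 t α hα)
    rw [h]
    refine mix_simplex _ (ih α hα).1 (ih α hα).2
      (fun x x' => ∑ u, πe α t x u * P x u (nbhd W (μ t) α) x') fun x => ?_
    exact mix_simplex _ (hπe α hα t x).1 (hπe α hα t x).2 _ fun u =>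
      hP _ _ _ (nbhd_subProb W hW _ (hμ.1 t) (fun β hβ => ih β (Set.Ioc_subset_Icc_self hβ)) α)

lemma kernel_diff {𝒳 𝒰 : Type*} [Fintype 𝒳] [Fintype 𝒰]
    (P : 𝒳 → 𝒰 → (𝒳 → ℝ) → 𝒳 → ℝ) (hP : IsKernel P) (L : ℝ) (hL : KernelLipschitz P L)
    (a b : 𝒰 → ℝ) (hb : ∀ u, 0 ≤ b u) (hb1 : ∑ u, b u = 1)
    (x : 𝒳) (ν ν' : 𝒳 → ℝ) (hν : ν ∈ subProb 𝒳) (hν' : ν' ∈ subProb 𝒳) :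
    ∑ y, |∑ u, a u * P x u ν y - ∑ u, b u * P x u ν' y| ≤ ∑ u, |a u - b u| + L * l1dist ν ν' := by
  calc ∑ y, |∑ u, a u * P x u ν y - ∑ u, b u * P x u ν' y|
      ≤ ∑ y, ∑ u, (|a u - b u| * P x u ν y + b u * |P x u ν y - P x u ν' y|) := by
        refine Finset.sum_le_sum fun y _ => ?_
        rw [← Finset.sum_sub_distrib]
        refine (Finset.abs_sum_le_sum_abs _ _).trans (Finset.sum_le_sum fun u _ => ?_)
        have e : a u * P x u ν y - b u * P x u ν' y =
          (a u - b u) * P x u ν y + b u * (P x u ν y - P x u ν' y) := by ring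
        rw [e]
        refine (abs_add_le _ _).trans (le_of_eq ?_)
        rw [abs_mul, abs_mul, abs_of_nonneg ((hP x u ν hν).1 y), abs_of_nonneg (hb u)]
    _ = ∑ u, (|a u - b u| * ∑ y, P x u ν y + b u * l1dist (P x u ν) (P x u ν')) := by
        rw [Finset.sum_comm]
        refine Finset.sum_congr rfl fun u _ => ?_
        rw [Finset.sum_add_distrib, Finset.mul_sum, l1dist, Finset.mul_sum]
    _ ≤ ∑ u, (|a u - b u| + b u * (L * l1dist ν ν')) := by
        refine Finset.sum_le_sum fun u _ => ?_
        rw [(hP x u ν hν).2, mul_one]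
        have := mul_le_mul_of_nonneg_left (hL x u ν ν' hν hν') (hb u)
        linarith
    _ = _ := by rw [Finset.sum_add_distrib, ← Finset.sum_mul, hb1, one_mul]

lemma step_measurable {N : ℕ} (ξ : Fin N → Fin N → ℝ) :
    Measurable (Function.uncurry (stepGraphon ξ)) := by
  have hs : ∀ i : Fin N, MeasurableSet
      {a : ℝ | ((i : ℕ) : ℝ) / N < a ∧ a ≤ (((i : ℕ) : ℝ) + 1) / N} := fun i => measurableSet_Ioc
  have hi : ∀ i : Fin N, Measurable fun a : ℝ =>
      (if ((i : ℕ) : ℝ) / N < a ∧ a ≤ (((i : ℕ) : ℝ) + 1) / N then (1:ℝ) else 0) := fun i =>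
    Measurable.ite (hs i) measurable_const measurable_const
  unfold stepGraphon Function.uncurry
  refine Finset.measurable_sum _ fun i _ => Finset.measurable_sum _ fun j _ => ?_
  exact (((hi i).comp measurable_fst).mul ((hi j).comp measurable_snd)).mul_const _

/-- The test function attached to a neighborhood. -/
noncomputable def nbTest {𝒳 : Type*} [DecidableEq 𝒳] (W : ℝ → ℝ → ℝ) (α : ℝ) (x : 𝒳) : 𝒳 → ℝ → ℝ :=
  fun y β => W α β * (if y = x then 1 else 0)

lemma nbTest_meas {𝒳 : Type*} [DecidableEq 𝒳] (W : ℝ → ℝ → ℝ) (hW : IsGraphon W) (α : ℝ)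
    (x y : 𝒳) : Measurable (nbTest W α x y) :=
  Measurable.mul_const (hW.1.comp (measurable_const.prodMk measurable_id)) _

lemma nbTest_bound {𝒳 : Type*} [DecidableEq 𝒳] (W : ℝ → ℝ → ℝ) (hW : IsGraphon W) (α : ℝ)
    (x y : 𝒳) (β : ℝ) : |nbTest W α x y β| ≤ 1 := by
  unfold nbTest
  have h := hW.2.2 α β
  split_ifs
  · rw [mul_one, abs_of_nonneg h.1]; exact h.2
  · simp

lemma mfInt_nbTest {𝒳 : Type*} [Fintype 𝒳] [DecidableEq 𝒳] (W : ℝ → ℝ → ℝ) (α : ℝ) (x : 𝒳)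
    (ν : ℝ → 𝒳 → ℝ) : mfInt (nbTest W α x) ν = nbhd W ν α x := by
  unfold mfInt nbTest nbhd
  simp

lemma nbhd_diff {𝒳 : Type*} [Fintype 𝒳] [DecidableEq 𝒳] {N : ℕ} (hN : 0 < N)
    (ξ : Fin N → Fin N → ℝ) (hξ : IsEdgeWeights ξ) (W : ℝ → ℝ → ℝ) (hW : IsGraphon W)
    (ν : ℝ → 𝒳 → ℝ) (X : Fin N → 𝒳) (α : ℝ) (hα : α ∈ Set.Ioc (0:ℝ) 1) (x : 𝒳) :
    |empNbhd ξ X (idx N hN α) x - nbhd W ν α x| ≤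
      |∫ β in Set.Ioc (0:ℝ) 1, (stepGraphon ξ α β - W α β) *
          (if X (idx N hN β) = x then 1 else 0)| +
      |empInt (nbTest W α x) X - mfInt (nbTest W α x) ν| := by
  have hg : Measurable fun β => (if X (idx N hN β) = x then (1:ℝ) else 0) :=
    measurable_idx_comp N hN (fun i _ => if X i = x then (1:ℝ) else 0) fun i => measurable_const
  have hWm : Measurable (W α) := hW.1.comp (measurable_const.prodMk measurable_id)
  have hSm : Measurable (stepGraphon ξ α) :=
    (step_measurable ξ).comp (measurable_const.prodMk measurable_id)
  have h1 : IntegrableOn (fun β => W α β * (if X (idx N hN β) = x then 1 else 0))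
      (Set.Ioc (0:ℝ) 1) := intb (C := 1) (hWm.mul hg) fun β _ => nbTest_bound W hW α x _ β
  have h2 : IntegrableOn (fun β => stepGraphon ξ α β * (if X (idx N hN β) = x then 1 else 0))
      (Set.Ioc (0:ℝ) 1) := intb (C := 1) (hSm.mul hg) fun β hβ => by
    rw [step_eq hN ξ α β hα hβ]
    rcases hξ.1 (idx N hN α) (idx N hN β) with h | h <;> rw [h] <;> split_ifs <;> simp
  have e : ∫ β in Set.Ioc (0:ℝ) 1, (stepGraphon ξ α β - W α β) *
          (if X (idx N hN β) = x then 1 else 0) =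
      empNbhd ξ X (idx N hN α) x - empInt (nbTest W α x) X := by
    rw [empNbhd_eq hN ξ hξ X α hα x,
      empInt_eq hN _ (nbTest_meas W hW α x) (fun y β => nbTest_bound W hW α x y β) X]
    simp only [nbTest]
    rw [← integral_sub h2 h1]
    simp only [sub_mul]
  rw [e, mfInt_nbTest]
  have := abs_add_le (empNbhd ξ X (idx N hN α) x - empInt (nbTest W α x) X)
    (empInt (nbTest W α x) X - nbhd W ν α x)
  rwa [sub_add_sub_cancel] at this

/-! ### The induction step -/

lemma subProb_le_one {𝒳 : Type*} [Fintype 𝒳] {p : 𝒳 → ℝ} (hp : p ∈ subProb 𝒳) (x : 𝒳) :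
    p x ≤ 1 :=
  (Finset.single_le_sum (f := p) (fun y _ => hp.1 y) (Finset.mem_univ x)).trans hp.2

lemma abs_sub_le_one_of {a b : ℝ} (ha : 0 ≤ a) (ha1 : a ≤ 1) (hb : 0 ≤ b) (hb1 : b ≤ 1) :
    |a - b| ≤ 1 := abs_sub_le_iff.2 ⟨by linarith, by linarith⟩

lemma abs_mix_le {𝒳 : Type*} [Fintype 𝒳] {p : 𝒳 → ℝ} (hp : p ∈ simplex 𝒳) (z : 𝒳 → ℝ)
    (hz : ∀ x, |z x| ≤ 1) : |∑ x, z x * p x| ≤ 1 := by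
  calc |∑ x, z x * p x| ≤ ∑ x, |z x * p x| := Finset.abs_sum_le_sum_abs _ _
    _ ≤ ∑ x, p x := Finset.sum_le_sum fun x _ => by
        rw [abs_mul, abs_of_nonneg (hp.1 x)]
        exact mul_le_of_le_one_left (hp.1 x) (hz x)
    _ = 1 := hp.2

/-- The empirical step ensemble. -/
noncomputable def empEns {𝒳 : Type*} [DecidableEq 𝒳] {N : ℕ} (hN : 0 < N) (X : Fin N → 𝒳) :
    ℝ → 𝒳 → ℝ := fun β x => if X (idx N hN β) = x then 1 else 0

lemma empEns_meas {𝒳 : Type*} [DecidableEq 𝒳] {N : ℕ} (hN : 0 < N) (X : Fin N → 𝒳) (x : 𝒳) :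
    Measurable fun β => empEns hN X β x :=
  measurable_idx_comp N hN (fun i _ => if X i = x then (1:ℝ) else 0) fun i => measurable_const

lemma empEns_simplex {𝒳 : Type*} [Fintype 𝒳] [DecidableEq 𝒳] {N : ℕ} (hN : 0 < N)
    (X : Fin N → 𝒳) (β : ℝ) : empEns hN X β ∈ simplex 𝒳 := by
  refine ⟨fun x => ?_, ?_⟩
  · unfold empEns; split_ifs <;> norm_num
  · simp [empEns]

lemma empInt_nbTest {𝒳 : Type*} [Fintype 𝒳] [DecidableEq 𝒳] {N : ℕ} (hN : 0 < N)
    (W : ℝ → ℝ → ℝ) (hW : IsGraphon W) (α : ℝ) (x : 𝒳) (X : Fin N → 𝒳) :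
    empInt (nbTest W α x) X = nbhd W (empEns hN X) α x := by
  rw [empInt_eq hN _ (nbTest_meas W hW α x) (fun y β => nbTest_bound W hW α x y β) X]
  rfl

lemma nbTest_diff_int {𝒳 : Type*} [Fintype 𝒳] [DecidableEq 𝒳] {N : ℕ} (hN : 0 < N)
    (W : ℝ → ℝ → ℝ) (hW : IsGraphon W)
    (ν : ℝ → 𝒳 → ℝ) (hνm : ∀ x, Measurable fun α => ν α x)
    (hν : ∀ α ∈ Set.Ioc (0:ℝ) 1, ν α ∈ simplex 𝒳) (X : Fin N → 𝒳) (x : 𝒳) :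
    IntegrableOn (fun α => |empInt (nbTest W α x) X - mfInt (nbTest W α x) ν|)
      (Set.Ioc (0:ℝ) 1) := by
  simp only [empInt_nbTest hN W hW, mfInt_nbTest]
  refine intb (C := 1) ((nbhd_measurable W hW _ (empEns_meas hN X) x).sub
    (nbhd_measurable W hW ν hνm x)).abs fun α _ => ?_
  have h1 := nbhd_subProb W hW _ (empEns_meas hN X) (fun β _ => empEns_simplex hN X β) α
  have h2 := nbhd_subProb W hW ν hνm hν α
  rw [abs_abs]
  exact abs_sub_le_one_of (h1.1 x) (subProb_le_one h1 x) (h2.1 x) (subProb_le_one h2 x)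

lemma l1_int {𝒳 : Type*} [Fintype 𝒳] [DecidableEq 𝒳] {N : ℕ} (hN : 0 < N)
    (ξ : Fin N → Fin N → ℝ) (hξ : IsEdgeWeights ξ) (W : ℝ → ℝ → ℝ) (hW : IsGraphon W)
    (ν : ℝ → 𝒳 → ℝ) (hνm : ∀ x, Measurable fun α => ν α x)
    (hν : ∀ α ∈ Set.Ioc (0:ℝ) 1, ν α ∈ simplex 𝒳) (X : Fin N → 𝒳) (x : 𝒳) :
    IntegrableOn (fun α => |empNbhd ξ X (idx N hN α) x - nbhd W ν α x|) (Set.Ioc (0:ℝ) 1) := by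
  refine intb (C := 1) ((measurable_idx_comp N hN (fun i _ => empNbhd ξ X i x)
    (fun _ => measurable_const)).sub (nbhd_measurable W hW ν hνm x)).abs fun α _ => ?_
  have h1 := emp_subProb ξ hξ X (idx N hN α)
  have h2 := nbhd_subProb W hW ν hνm hν α
  rw [abs_abs]
  exact abs_sub_le_one_of (h1.1 x) (subProb_le_one h1 x) (h2.1 x) (subProb_le_one h2 x)

lemma l1_bound {𝒳 : Type*} [Fintype 𝒳] [DecidableEq 𝒳] {N : ℕ} (hN : 0 < N)
    (ξ : Fin N → Fin N → ℝ) (hξ : IsEdgeWeights ξ) (W : ℝ → ℝ → ℝ) (hW : IsGraphon W)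
    (ε : ℝ) (hε : ∀ g : ℝ → ℝ, Measurable g → (∀ β, |g β| ≤ 1) →
      (∫ α in Set.Ioc (0:ℝ) 1, |∫ β in Set.Ioc (0:ℝ) 1, (stepGraphon ξ α β - W α β) * g β|) ≤ ε)
    (ν : ℝ → 𝒳 → ℝ) (hνm : ∀ x, Measurable fun α => ν α x)
    (hν : ∀ α ∈ Set.Ioc (0:ℝ) 1, ν α ∈ simplex 𝒳) (X : Fin N → 𝒳) :
    ∫ α in Set.Ioc (0:ℝ) 1, l1dist (empNbhd ξ X (idx N hN α)) (nbhd W ν α) ≤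
      ∑ x, (ε + ∫ α in Set.Ioc (0:ℝ) 1,
        |empInt (nbTest W α x) X - mfInt (nbTest W α x) ν|) := by
  unfold l1dist
  rw [integral_finsetSum _ fun x _ => l1_int hN ξ hξ W hW ν hνm hν X x]
  refine Finset.sum_le_sum fun x _ => ?_
  have hgm := empEns_meas hN X x
  have hgb : ∀ β, |empEns hN X β x| ≤ 1 := fun β => by
    unfold empEns; split_ifs <;> simp
  have hi1 : IntegrableOn (fun α => |∫ β in Set.Ioc (0:ℝ) 1,
      (stepGraphon ξ α β - W α β) * empEns hN X β x|) (Set.Ioc (0:ℝ) 1) := by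
    have hm : StronglyMeasurable (Function.uncurry fun α β =>
        (stepGraphon ξ α β - W α β) * empEns hN X β x) := by
      apply Measurable.stronglyMeasurable
      exact ((step_measurable ξ).sub hW.1).mul (hgm.comp measurable_snd)
    refine intb (C := 1)
      (hm.integral_prod_right (ν := volume.restrict (Set.Ioc (0:ℝ) 1))).measurable.abs
      fun α hα => ?_
    rw [abs_abs]
    have := norm_setIntegral_le_of_norm_le_const (μ := volume) (s := Set.Ioc (0:ℝ) 1) (C := 1)
      (f := fun β => (stepGraphon ξ α β - W α β) * empEns hN X β x) (by simp) (fun β hβ => by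
        rw [Real.norm_eq_abs, abs_mul]
        refine mul_le_one₀ ?_ (abs_nonneg _) (hgb β)
        rw [step_eq hN ξ α β hα hβ]
        have hw := hW.2.2 α β
        rcases hξ.1 (idx N hN α) (idx N hN β) with h | h <;> rw [h] <;>
          exact abs_sub_le_one_of (by norm_num) (by norm_num) hw.1 hw.2)
    simpa using this
  have hi2 := nbTest_diff_int hN W hW ν hνm hν X x
  calc _ ≤ ∫ α in Set.Ioc (0:ℝ) 1, (|∫ β in Set.Ioc (0:ℝ) 1,
          (stepGraphon ξ α β - W α β) * empEns hN X β x| +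
        |empInt (nbTest W α x) X - mfInt (nbTest W α x) ν|) :=
        setIntegral_mono_on (l1_int hN ξ hξ W hW ν hνm hν X x) (hi1.add hi2) measurableSet_Ioc
          fun α hα => nbhd_diff hN ξ hξ W hW ν X α hα x
    _ ≤ _ := by
        rw [integral_add hi1 hi2]
        gcongr
        exact hε _ hgm hgb

/-- One step transition of the test function. -/
noncomputable def pull {𝒳 𝒰 : Type*} [Fintype 𝒳] [Fintype 𝒰]
    (P : 𝒳 → 𝒰 → (𝒳 → ℝ) → 𝒳 → ℝ) (W : ℝ → ℝ → ℝ) (πe : ℝ → ℕ → 𝒳 → 𝒰 → ℝ) (ν : ℝ → 𝒳 → ℝ)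
    (t : ℕ) (f : 𝒳 → ℝ → ℝ) : 𝒳 → ℝ → ℝ := fun x =>
  (Set.Ioc (0:ℝ) 1).indicator fun α =>
    ∑ y, f y α * ∑ u, πe α t x u * P x u (nbhd W ν α) y


lemma pull_ker_meas {𝒳 𝒰 : Type*} [Fintype 𝒳] [Fintype 𝒰]
    (P : 𝒳 → 𝒰 → (𝒳 → ℝ) → 𝒳 → ℝ)
    (L : ℝ) (hL : KernelLipschitz P L)
    (W : ℝ → ℝ → ℝ) (hW : IsGraphon W)
    (πe : ℝ → ℕ → 𝒳 → 𝒰 → ℝ)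
    (hπm : ∀ t x u, Measurable fun α => πe α t x u)
    (ν : ℝ → 𝒳 → ℝ) (hνm : ∀ x, Measurable fun α => ν α x)
    (hν : ∀ α ∈ Set.Ioc (0:ℝ) 1, ν α ∈ simplex 𝒳) (t : ℕ) (x y : 𝒳) :
    Measurable fun α => ∑ u, πe α t x u * P x u (nbhd W ν α) y :=
  Finset.measurable_sum _ fun u _ => (hπm t x u).mul (kernel_measurable P L hL _
    (nbhd_measurable W hW ν hνm) (nbhd_subProb W hW ν hνm hν) x u y)

lemma pull_meas {𝒳 𝒰 : Type*} [Fintype 𝒳] [Fintype 𝒰]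
    (P : 𝒳 → 𝒰 → (𝒳 → ℝ) → 𝒳 → ℝ)
    (L : ℝ) (hL : KernelLipschitz P L)
    (W : ℝ → ℝ → ℝ) (hW : IsGraphon W)
    (πe : ℝ → ℕ → 𝒳 → 𝒰 → ℝ)
    (hπm : ∀ t x u, Measurable fun α => πe α t x u)
    (ν : ℝ → 𝒳 → ℝ) (hνm : ∀ x, Measurable fun α => ν α x)
    (hν : ∀ α ∈ Set.Ioc (0:ℝ) 1, ν α ∈ simplex 𝒳) (t : ℕ)
    (f : 𝒳 → ℝ → ℝ) (hf : ∀ x, Measurable (f x)) (x : 𝒳) :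
    Measurable (pull P W πe ν t f x) := by
  refine Measurable.indicator ?_ measurableSet_Ioc
  exact Finset.measurable_sum _ fun y _ =>
    (hf y).mul (pull_ker_meas P L hL W hW πe hπm ν hνm hν t x y)

lemma pull_ker_simplex {𝒳 𝒰 : Type*} [Fintype 𝒳] [Fintype 𝒰]
    (P : 𝒳 → 𝒰 → (𝒳 → ℝ) → 𝒳 → ℝ) (hP : IsKernel P)
    (W : ℝ → ℝ → ℝ) (hW : IsGraphon W)
    (πe : ℝ → ℕ → 𝒳 → 𝒰 → ℝ)
    (hπe : ∀ α ∈ Set.Icc (0:ℝ) 1, IsPolicy (πe α))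
    (ν : ℝ → 𝒳 → ℝ) (hνm : ∀ x, Measurable fun α => ν α x)
    (hν : ∀ α ∈ Set.Ioc (0:ℝ) 1, ν α ∈ simplex 𝒳) (t : ℕ)
    (α : ℝ) (hα : α ∈ Set.Ioc (0:ℝ) 1) (x : 𝒳) :
    (fun y => ∑ u, πe α t x u * P x u (nbhd W ν α) y) ∈ simplex 𝒳 := by
  have h := hπe α (Set.Ioc_subset_Icc_self hα) t x
  exact mix_simplex _ h.1 h.2 _ fun _ => hP _ _ _ (nbhd_subProb W hW ν hνm hν α)

lemma pull_bound {𝒳 𝒰 : Type*} [Fintype 𝒳] [Fintype 𝒰]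
    (P : 𝒳 → 𝒰 → (𝒳 → ℝ) → 𝒳 → ℝ) (hP : IsKernel P)
    (W : ℝ → ℝ → ℝ) (hW : IsGraphon W)
    (πe : ℝ → ℕ → 𝒳 → 𝒰 → ℝ)
    (hπe : ∀ α ∈ Set.Icc (0:ℝ) 1, IsPolicy (πe α))
    (ν : ℝ → 𝒳 → ℝ) (hνm : ∀ x, Measurable fun α => ν α x)
    (hν : ∀ α ∈ Set.Ioc (0:ℝ) 1, ν α ∈ simplex 𝒳) (t : ℕ)
    (f : 𝒳 → ℝ → ℝ) (hfb : ∀ x α, |f x α| ≤ 1) (x : 𝒳) (α : ℝ) :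
    |pull P W πe ν t f x α| ≤ 1 := by
  unfold pull
  by_cases hα : α ∈ Set.Ioc (0:ℝ) 1
  · rw [Set.indicator_of_mem hα]
    exact abs_mix_le (pull_ker_simplex P hP W hW πe hπe ν hνm hν t α hα x) (fun y => f y α)
      fun y => hfb y α
  · rw [Set.indicator_of_notMem hα]; simp

lemma mfInt_pull {𝒳 𝒰 : Type*} [Fintype 𝒳] [Fintype 𝒰]
    (P : 𝒳 → 𝒰 → (𝒳 → ℝ) → 𝒳 → ℝ) (W : ℝ → ℝ → ℝ) (πe : ℝ → ℕ → 𝒳 → 𝒰 → ℝ)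
    (ν ν' : ℝ → 𝒳 → ℝ) (t : ℕ)
    (hν' : ∀ α ∈ Set.Icc (0:ℝ) 1, ∀ x' : 𝒳,
      ν' α x' = ∑ x, ν α x * ∑ u, πe α t x u * P x u (nbhd W ν α) x')
    (f : 𝒳 → ℝ → ℝ) : mfInt (pull P W πe ν t f) ν = mfInt f ν' := by
  unfold mfInt
  refine setIntegral_congr_fun measurableSet_Ioc fun α hα => ?_
  simp only [pull, Set.indicator_of_mem hα, hν' α (Set.Ioc_subset_Icc_self hα)]
  simp only [Finset.sum_mul, Finset.mul_sum]
  rw [Finset.sum_comm]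
  refine Finset.sum_congr rfl fun y _ => Finset.sum_congr rfl fun x _ =>
    Finset.sum_congr rfl fun u _ => by ring


lemma mean_eq {𝒳 : Type*} [Fintype 𝒳] {N : ℕ} (hN : 0 < N) (q : Fin N → 𝒳 → ℝ)
    (hq : ∀ i, q i ∈ simplex 𝒳)
    (f : 𝒳 → ℝ → ℝ) (hf : ∀ x, Measurable (f x)) (hfb : ∀ x α, |f x α| ≤ 1) :
    ∑ i : Fin N, ∑ y, q i y *
      ∫ α in Set.Ioc (((i : ℕ) : ℝ) / N) ((((i : ℕ) : ℝ) + 1) / N), f y α =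
    ∫ α in Set.Ioc (0:ℝ) 1, ∑ y, f y α * q (idx N hN α) y := by
  rw [integral_idx N hN (fun i α => ∑ y, f y α * q i y)
    (fun i => Finset.measurable_sum _ fun y _ => (hf y).mul_const _) 1
    (fun i α _ => abs_mix_le (hq i) (fun y => f y α) fun y => hfb y α)]
  refine Finset.sum_congr rfl fun i _ => ?_
  rw [integral_finsetSum]
  · refine Finset.sum_congr rfl fun y _ => ?_
    rw [integral_mul_const, mul_comm]
  · intro y _
    exact ((intb (hf y) fun α _ => hfb y α).mono_set (bin_subset N i)).mul_const _

lemma conc_empInt {𝒳 : Type*} [Fintype 𝒳] {N : ℕ} (hN : 0 < N) (q : Fin N → 𝒳 → ℝ)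
    (hq : ∀ i, q i ∈ simplex 𝒳)
    (f : 𝒳 → ℝ → ℝ) (hf : ∀ x, Measurable (f x)) (hfb : ∀ x α, |f x α| ≤ 1) :
    ∑ Y : Fin N → 𝒳, (∏ k, q k (Y k)) *
      |empInt f Y - ∫ α in Set.Ioc (0:ℝ) 1, ∑ y, f y α * q (idx N hN α) y|
      ≤ 2 / Real.sqrt N := by
  rw [← mean_eq hN q hq f hf hfb]
  have h := prod_law_conc q hq (fun i y =>
    ∫ α in Set.Ioc (((i : ℕ) : ℝ) / N) ((((i : ℕ) : ℝ) + 1) / N), f y α) (N:ℝ)⁻¹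
    (fun i y => abs_bin_integral_le N i (f y) (hfb y))
  refine h.trans (le_of_eq ?_)
  have hN' : (0:ℝ) < N := by exact_mod_cast hN
  have e : (N:ℝ) * (2 * (N:ℝ)⁻¹) ^ 2 = 2 ^ 2 / N := by field_simp
  rw [e, Real.sqrt_div (by norm_num), Real.sqrt_sq (by norm_num)]

lemma mean_bound {𝒳 𝒰 : Type*} [Fintype 𝒳] [DecidableEq 𝒳] [Fintype 𝒰] {N : ℕ} (hN : 0 < N)
    (P : 𝒳 → 𝒰 → (𝒳 → ℝ) → 𝒳 → ℝ) (hP : IsKernel P)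
    (L : ℝ) (hL : KernelLipschitz P L) (hL0 : 0 ≤ L)
    (W : ℝ → ℝ → ℝ) (hW : IsGraphon W)
    (ξ : Fin N → Fin N → ℝ) (hξ : IsEdgeWeights ξ)
    (ε : ℝ) (hε : ∀ g : ℝ → ℝ, Measurable g → (∀ β, |g β| ≤ 1) →
      (∫ α in Set.Ioc (0:ℝ) 1, |∫ β in Set.Ioc (0:ℝ) 1, (stepGraphon ξ α β - W α β) * g β|) ≤ ε)
    (πs : Fin N → ℕ → 𝒳 → 𝒰 → ℝ) (hπs : ∀ i, IsPolicy (πs i))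
    (πe : ℝ → ℕ → 𝒳 → 𝒰 → ℝ)
    (hπe : ∀ α ∈ Set.Icc (0:ℝ) 1, IsPolicy (πe α))
    (hπm : ∀ t x u, Measurable fun α => πe α t x u)
    (ν ν' : ℝ → 𝒳 → ℝ) (hνm : ∀ x, Measurable fun α => ν α x)
    (hν : ∀ α ∈ Set.Ioc (0:ℝ) 1, ν α ∈ simplex 𝒳) (t : ℕ)
    (hν' : ∀ α ∈ Set.Icc (0:ℝ) 1, ∀ x' : 𝒳,
      ν' α x' = ∑ x, ν α x * ∑ u, πe α t x u * P x u (nbhd W ν α) x')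
    (δ : ℝ) (hδ : ∫ α in Set.Ioc (0:ℝ) 1, ∑ x, ∑ u, |πs (idx N hN α) t x u - πe α t x u| ≤ δ)
    (f : 𝒳 → ℝ → ℝ) (hf : ∀ x, Measurable (f x)) (hfb : ∀ x α, |f x α| ≤ 1) (X : Fin N → 𝒳) :
    |(∫ α in Set.Ioc (0:ℝ) 1, ∑ y, f y α *
        ∑ u, πs (idx N hN α) t (X (idx N hN α)) u *
          P (X (idx N hN α)) u (empNbhd ξ X (idx N hN α)) y) - mfInt f ν'| ≤
      δ + L * ∑ x, (ε + ∫ α in Set.Ioc (0:ℝ) 1,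
        |empInt (nbTest W α x) X - mfInt (nbTest W α x) ν|) +
      |empInt (pull P W πe ν t f) X - mfInt (pull P W πe ν t f) ν| := by
  have hq := stepKer_simplex P hP ξ hξ πs hπs t X
  have hpm := pull_meas P L hL W hW πe hπm ν hνm hν t f hf
  have hpb := pull_bound P hP W hW πe hπe ν hνm hν t f hfb
  rw [mfInt_pull P W πe ν ν' t hν' f]
  set A := ∫ α in Set.Ioc (0:ℝ) 1, ∑ y, f y α *
        ∑ u, πs (idx N hN α) t (X (idx N hN α)) u *
          P (X (idx N hN α)) u (empNbhd ξ X (idx N hN α)) y with hA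
  have hmain : |A - empInt (pull P W πe ν t f) X| ≤ δ + L * ∑ x, (ε + ∫ α in Set.Ioc (0:ℝ) 1,
        |empInt (nbTest W α x) X - mfInt (nbTest W α x) ν|) := by
    rw [empInt_eq hN _ hpm hpb X, hA]
    have hi1 : IntegrableOn (fun α => ∑ y, f y α *
        ∑ u, πs (idx N hN α) t (X (idx N hN α)) u *
          P (X (idx N hN α)) u (empNbhd ξ X (idx N hN α)) y) (Set.Ioc (0:ℝ) 1) := by
      refine intb (C := 1) (measurable_idx_comp N hN (fun i α => ∑ y, f y α *
        ∑ u, πs i t (X i) u * P (X i) u (empNbhd ξ X i) y)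
        fun i => Finset.measurable_sum _ fun y _ => (hf y).mul_const _) fun α _ => ?_
      exact abs_mix_le (hq _) (fun y => f y α) fun y => hfb y α
    have hi2 : IntegrableOn (fun α => pull P W πe ν t f (X (idx N hN α)) α) (Set.Ioc (0:ℝ) 1) :=
      intb (measurable_idx_comp N hN (fun i α => pull P W πe ν t f (X i) α) fun i => hpm _)
        fun α _ => hpb _ α
    have hπle : ∀ {p : 𝒰 → ℝ}, (∀ u, 0 ≤ p u) → ∑ u, p u = 1 → ∀ u, p u ≤ 1 :=
      fun h0 h1 u => subProb_le_one ⟨h0, h1.le⟩ u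
    have hi3 : IntegrableOn (fun α => ∑ x, ∑ u, |πs (idx N hN α) t x u - πe α t x u|)
        (Set.Ioc (0:ℝ) 1) := by
      refine integrable_finsetSum _ fun x _ => integrable_finsetSum _ fun u _ => ?_
      refine intb (C := 1) (measurable_idx_comp N hN (fun i α => |πs i t x u - πe α t x u|)
        fun i => ((hπm t x u).const_sub _).abs) fun α hα => ?_
      have h1 := hπs (idx N hN α) t x
      have h2 := hπe α (Set.Ioc_subset_Icc_self hα) t x
      rw [abs_abs]
      exact abs_sub_le_one_of (h1.1 u) (hπle h1.1 h1.2 u) (h2.1 u) (hπle h2.1 h2.2 u)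
    have hi4 : IntegrableOn (fun α => l1dist (empNbhd ξ X (idx N hN α)) (nbhd W ν α))
        (Set.Ioc (0:ℝ) 1) :=
      integrable_finsetSum _ fun x _ => l1_int hN ξ hξ W hW ν hνm hν X x
    rw [← integral_sub hi1 hi2]
    calc _ ≤ ∫ α in Set.Ioc (0:ℝ) 1, ((∑ x, ∑ u, |πs (idx N hN α) t x u - πe α t x u|) +
            L * l1dist (empNbhd ξ X (idx N hN α)) (nbhd W ν α)) := by
          rw [← Real.norm_eq_abs]
          refine norm_integral_le_of_norm_le (hi3.add (hi4.const_mul L)) ?_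
          refine (ae_restrict_iff' measurableSet_Ioc).2 (Eventually.of_forall fun α hα => ?_)
          simp only [pull, Set.indicator_of_mem hα, Real.norm_eq_abs]
          rw [← Finset.sum_sub_distrib]
          have h2 := hπe α (Set.Ioc_subset_Icc_self hα) t (X (idx N hN α))
          have hk := kernel_diff P hP L hL (πs (idx N hN α) t (X (idx N hN α)))
            (πe α t (X (idx N hN α))) h2.1 h2.2 (X (idx N hN α))
            (empNbhd ξ X (idx N hN α)) (nbhd W ν α) (emp_subProb ξ hξ X _)
            (nbhd_subProb W hW ν hνm hν α)
          have h3 : ∑ u, |πs (idx N hN α) t (X (idx N hN α)) u - πe α t (X (idx N hN α)) u| ≤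
              ∑ x, ∑ u, |πs (idx N hN α) t x u - πe α t x u| :=
            Finset.single_le_sum (f := fun x => ∑ u, |πs (idx N hN α) t x u - πe α t x u|)
              (fun x _ => Finset.sum_nonneg fun u _ => abs_nonneg _) (Finset.mem_univ _)
          refine (Finset.abs_sum_le_sum_abs _ _).trans ?_
          refine le_trans (Finset.sum_le_sum fun y _ => ?_) (hk.trans (by linarith))
          rw [← mul_sub, abs_mul]
          exact mul_le_of_le_one_left (abs_nonneg _) (hfb y α)
      _ ≤ _ := by
          rw [integral_add hi3 (hi4.const_mul L), integral_const_mul]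
          have := l1_bound hN ξ hξ W hW ε hε ν hνm hν X
          gcongr
  have := abs_add_le (A - empInt (pull P W πe ν t f) X)
    (empInt (pull P W πe ν t f) X - mfInt f ν')
  rw [sub_add_sub_cancel] at this
  linarith

/-- Constants of the induction. -/
noncomputable def indC (L K n : ℝ) : ℕ → ℝ
  | 0 => 2
  | (t+1) => 2 + K + L * (n * (1 + indC L K n t)) + indC L K n t

lemma indC_nonneg (L K n : ℝ) (hL : 0 ≤ L) (hK : 0 ≤ K) (hn : 0 ≤ n) (t : ℕ) :
    0 ≤ indC L K n t := by
  induction t with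
  | zero => simp [indC]
  | succ t ih => simp only [indC]; positivity

lemma main_bound {𝒳 𝒰 : Type*} [Fintype 𝒳] [DecidableEq 𝒳] [Fintype 𝒰] {N : ℕ} (hN : 0 < N)
    (μ0 : 𝒳 → ℝ) (hμ0 : μ0 ∈ simplex 𝒳)
    (P : 𝒳 → 𝒰 → (𝒳 → ℝ) → 𝒳 → ℝ) (hP : IsKernel P)
    (L : ℝ) (hL : KernelLipschitz P L) (hL0 : 0 ≤ L)
    (W : ℝ → ℝ → ℝ) (hW : IsGraphon W)
    (ξ : Fin N → Fin N → ℝ) (hξ : IsEdgeWeights ξ)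
    (ε : ℝ) (hε : ∀ g : ℝ → ℝ, Measurable g → (∀ β, |g β| ≤ 1) →
      (∫ α in Set.Ioc (0:ℝ) 1, |∫ β in Set.Ioc (0:ℝ) 1, (stepGraphon ξ α β - W α β) * g β|) ≤ ε)
    (πs : Fin N → ℕ → 𝒳 → 𝒰 → ℝ) (hπs : ∀ i, IsPolicy (πs i))
    (πe : ℝ → ℕ → 𝒳 → 𝒰 → ℝ)
    (hπe : ∀ α ∈ Set.Icc (0:ℝ) 1, IsPolicy (πe α))
    (hπm : ∀ t x u, Measurable fun α => πe α t x u)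
    (μ : ℕ → ℝ → 𝒳 → ℝ) (hμ : IsMeanFieldOf W P μ0 πe μ)
    (K : ℝ) (hK : 0 ≤ K)
    (hδ : ∀ t, ∫ α in Set.Ioc (0:ℝ) 1, ∑ x, ∑ u, |πs (idx N hN α) t x u - πe α t x u|
      ≤ K * (1 / Real.sqrt N)) (t : ℕ) :
    ∀ f : 𝒳 → ℝ → ℝ, (∀ x, Measurable (f x)) → (∀ x α, |f x α| ≤ 1) →
      ∑ X : Fin N → 𝒳, jointLaw P μ0 ξ πs t X * |empInt f X - mfInt f (μ t)| ≤
        indC L K (Fintype.card 𝒳) t * (ε + 1 / Real.sqrt N) := by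
  have hε0 : 0 ≤ ε := by
    have := hε (fun _ => 0) measurable_const (by simp)
    simpa using this
  set r := 1 / Real.sqrt (N:ℝ) with hr
  have hr0 : 0 ≤ r := by positivity
  have h2r : 2 / Real.sqrt (N:ℝ) = 2 * r := by rw [hr]; ring
  have hs : ∀ t, ∀ α ∈ Set.Ioc (0:ℝ) 1, μ t α ∈ simplex 𝒳 := fun t α hα =>
    mf_simplex W hW P hP μ0 hμ0 πe hπe μ hμ t α (Set.Ioc_subset_Icc_self hα)
  induction t with
  | zero =>
    intro f hf hfb
    have h := conc_empInt hN (fun _ => μ0) (fun _ => hμ0) f hf hfb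
    have e : mfInt f (μ 0) = ∫ α in Set.Ioc (0:ℝ) 1, ∑ y, f y α * μ0 y :=
      setIntegral_congr_fun measurableSet_Ioc fun α hα => by
        simp only [hμ.2.1 α (Set.Ioc_subset_Icc_self hα)]
    rw [e]
    refine h.trans ?_
    rw [h2r]; simp only [indC]; linarith
  | succ t ih =>
    intro f hf hfb
    obtain ⟨hp, hp1⟩ := jointLaw_prob P hP μ0 hμ0 ξ hξ πs hπs t
    set B := indC L K (Fintype.card 𝒳) t * (ε + r) with hB
    rw [jointLaw_succ_expect]
    have hpt : ∀ X : Fin N → 𝒳,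
        ∑ Y : Fin N → 𝒳, (∏ i, ∑ u, πs i t (X i) u * P (X i) u (empNbhd ξ X i) (Y i)) *
          |empInt f Y - mfInt f (μ (t+1))| ≤
        2 * r + (K * r + L * ∑ x, (ε + ∫ α in Set.Ioc (0:ℝ) 1,
          |empInt (nbTest W α x) X - mfInt (nbTest W α x) (μ t)|) +
          |empInt (pull P W πe (μ t) t f) X - mfInt (pull P W πe (μ t) t f) (μ t)|) := by
      intro X
      have hq := stepKer_simplex P hP ξ hξ πs hπs t X
      obtain ⟨hq0, hq1⟩ := prod_law_prob _ hq
      have hc := conc_empInt hN _ hq f hf hfb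
      have hm := mean_bound hN P hP L hL hL0 W hW ξ hξ ε hε πs hπs πe hπe hπm (μ t) (μ (t+1))
        (hμ.1 t) (hs t) t (hμ.2.2 t) (K * r) (hδ t) f hf hfb X
      set A := ∫ α in Set.Ioc (0:ℝ) 1, ∑ y, f y α *
        ∑ u, πs (idx N hN α) t (X (idx N hN α)) u *
          P (X (idx N hN α)) u (empNbhd ξ X (idx N hN α)) y with hA
      calc _ ≤ ∑ Y : Fin N → 𝒳,
            ((∏ i, ∑ u, πs i t (X i) u * P (X i) u (empNbhd ξ X i) (Y i)) * |empInt f Y - A| +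
            (∏ i, ∑ u, πs i t (X i) u * P (X i) u (empNbhd ξ X i) (Y i)) *
              |A - mfInt f (μ (t+1))|) := by
            refine Finset.sum_le_sum fun Y _ => ?_
            rw [← mul_add]
            exact mul_le_mul_of_nonneg_left (abs_sub_le _ _ _) (hq0 Y)
        _ = ∑ Y : Fin N → 𝒳,
            (∏ i, ∑ u, πs i t (X i) u * P (X i) u (empNbhd ξ X i) (Y i)) * |empInt f Y - A| +
              |A - mfInt f (μ (t+1))| := by
            rw [Finset.sum_add_distrib, ← Finset.sum_mul, hq1, one_mul]
        _ ≤ _ := by rw [← h2r]; exact add_le_add hc hm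
    have hnb : ∀ x, ∑ X, jointLaw P μ0 ξ πs t X * ∫ α in Set.Ioc (0:ℝ) 1,
          |empInt (nbTest W α x) X - mfInt (nbTest W α x) (μ t)| ≤ B := by
      intro x
      have hi := fun X : Fin N → 𝒳 => nbTest_diff_int hN W hW (μ t) (hμ.1 t) (hs t) X x
      simp only [← integral_const_mul]
      rw [← integral_finsetSum _ fun X _ => (hi X).const_mul _]
      calc _ ≤ ∫ α in Set.Ioc (0:ℝ) 1, B :=
            setIntegral_mono_on (integrable_finsetSum _ fun X _ => (hi X).const_mul _)
              (integrableOn_const (by simp)) measurableSet_Ioc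
              fun α _ => ih _ (nbTest_meas W hW α x) (nbTest_bound W hW α x)
        _ = B := by simp
    have hpull := ih _ (pull_meas P L hL W hW πe hπm (μ t) (hμ.1 t) (hs t) t f hf)
      (pull_bound P hP W hW πe hπe (μ t) (hμ.1 t) (hs t) t f hfb)
    calc _ ≤ ∑ X, jointLaw P μ0 ξ πs t X * (2 * r + (K * r + L * ∑ x, (ε + ∫ α in Set.Ioc (0:ℝ) 1,
          |empInt (nbTest W α x) X - mfInt (nbTest W α x) (μ t)|) +
          |empInt (pull P W πe (μ t) t f) X - mfInt (pull P W πe (μ t) t f) (μ t)|)) :=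
          Finset.sum_le_sum fun X _ => mul_le_mul_of_nonneg_left (hpt X) (hp X)
      _ = 2 * r + (K * r + L * ∑ x, (ε + ∑ X, jointLaw P μ0 ξ πs t X * ∫ α in Set.Ioc (0:ℝ) 1,
          |empInt (nbTest W α x) X - mfInt (nbTest W α x) (μ t)|) +
          ∑ X, jointLaw P μ0 ξ πs t X *
          |empInt (pull P W πe (μ t) t f) X - mfInt (pull P W πe (μ t) t f) (μ t)|) := by
          simp only [mul_add, Finset.sum_add_distrib, ← Finset.sum_mul, hp1, one_mul]
          congr 3
          congr 1
          simp only [mul_left_comm _ L, ← Finset.mul_sum]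
          congr 1
          simp only [Finset.mul_sum]
          rw [Finset.sum_comm]
      _ ≤ 2 * r + (K * r + L * ∑ x : 𝒳, (ε + B) + B) := by
          gcongr with x _
          exact hnb x
      _ ≤ _ := by
          simp only [Finset.sum_const, Finset.card_univ, nsmul_eq_mul, indC, hB]
          have h1 : 0 ≤ L * (Fintype.card 𝒳 : ℝ) * r := by positivity
          have h2 : 0 ≤ K * ε := by positivity
          nlinarith

lemma gamma_mem {N : ℕ} (i : Fin N) : ((((i : ℕ) : ℝ) + 1) / N) ∈ Set.Icc (0:ℝ) 1 := by
  have hN' : (0:ℝ) < N := by exact_mod_cast i.pos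
  have hi : ((i:ℕ):ℝ) + 1 ≤ N := by exact_mod_cast i.isLt
  exact ⟨by positivity, by rwa [div_le_one hN']⟩

lemma update_policy {𝒳 𝒰 : Type*} [Fintype 𝒰] (πe : ℝ → ℕ → 𝒳 → 𝒰 → ℝ)
    (hπe : ∀ α ∈ Set.Icc (0:ℝ) 1, IsPolicy (πe α)) {N : ℕ} (i : Fin N)
    (πd : ℕ → 𝒳 → 𝒰 → ℝ) (hd : IsPolicy πd) (j : Fin N) :
    IsPolicy (Function.update (gammaN πe N) i πd j) := by
  by_cases h : j = i
  · subst h; simpa using hd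
  · rw [Function.update_of_ne h]; exact hπe _ (gamma_mem j)

lemma policy_mismatch {𝒳 𝒰 : Type*} [Fintype 𝒳] [Fintype 𝒰] (πe : ℝ → ℕ → 𝒳 → 𝒰 → ℝ)
    (hπe : ∀ α ∈ Set.Icc (0:ℝ) 1, IsPolicy (πe α))
    (hπm : ∀ t x u, Measurable fun α => πe α t x u)
    (hlip : EnsembleLipschitzUpTo πe) :
    ∃ K : ℝ, 0 ≤ K ∧ ∀ (N : ℕ) (hN : 0 < N) (i : Fin N) (πd : ℕ → 𝒳 → 𝒰 → ℝ), IsPolicy πd →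
      ∀ t, ∫ α in Set.Ioc (0:ℝ) 1, ∑ x, ∑ u,
        |Function.update (gammaN πe N) i πd (idx N hN α) t x u - πe α t x u|
        ≤ K * (1 / Real.sqrt N) := by
  obtain ⟨L, D, hLD⟩ := hlip
  refine ⟨Fintype.card 𝒳 * (Fintype.card 𝒰 * (|L| + 1 + D.card)), by positivity, ?_⟩
  intro N hN i πd hd t
  have hN' : (0:ℝ) < N := by exact_mod_cast hN
  have hN1 : (1:ℝ) ≤ N := by exact_mod_cast hN
  set πs := Function.update (gammaN πe N) i πd with hπs
  have hπsp : ∀ j, IsPolicy (πs j) := update_policy πe hπe i πd hd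
  have h01 : ∀ x u, ∀ α ∈ Set.Ioc (0:ℝ) 1, |πs (idx N hN α) t x u - πe α t x u| ≤ 1 := by
    intro x u α hα
    have h1 := hπsp (idx N hN α) t x
    have h2 := hπe α (Set.Ioc_subset_Icc_self hα) t x
    exact abs_sub_le_one_of (h1.1 u) (subProb_le_one ⟨h1.1, h1.2.le⟩ u) (h2.1 u)
      (subProb_le_one ⟨h2.1, h2.2.le⟩ u)
  have h_intg : ∀ x u, IntegrableOn (fun α => |πs (idx N hN α) t x u - πe α t x u|)
      (Set.Ioc (0:ℝ) 1) := by
    intro x u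
    refine intb (C := 1) (measurable_idx_comp N hN (fun i α => |πs i t x u - πe α t x u|)
        fun i => ((hπm t x u).const_sub _).abs) fun α hα => ?_
    rw [abs_abs]
    exact h01 x u α hα
  have hind : ∀ j, IntegrableOn (fun α => if idx N hN α = j then (1:ℝ) else 0)
      (Set.Ioc (0:ℝ) 1) := fun j =>
    intb (C := 1) (measurable_idx_comp N hN (fun i _ => if i = j then (1:ℝ) else 0)
      fun _ => measurable_const) fun α _ => by split_ifs <;> simp
  have hone : ∀ x u, ∫ α in Set.Ioc (0:ℝ) 1, |πs (idx N hN α) t x u - πe α t x u| ≤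
      (|L| + 1 + D.card) * (N:ℝ)⁻¹ := by
    intro x u
    have hi1 : IntegrableOn (fun _ : ℝ => |L| * (N:ℝ)⁻¹) (Set.Ioc (0:ℝ) 1) :=
      integrableOn_const (by simp)
    have hi3 : IntegrableOn (fun α => ∑ d ∈ D, if idx N hN α = idx N hN d then (1:ℝ) else 0)
      (Set.Ioc (0:ℝ) 1) := integrable_finsetSum _ fun d _ => hind _
    have hi2 : IntegrableOn (fun α => |L| * (N:ℝ)⁻¹ + (if idx N hN α = i then (1:ℝ) else 0))
      (Set.Ioc (0:ℝ) 1) := hi1.add (hind i)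
    calc _ ≤ ∫ α in Set.Ioc (0:ℝ) 1, (|L| * (N:ℝ)⁻¹ + (if idx N hN α = i then (1:ℝ) else 0) +
          ∑ d ∈ D, if idx N hN α = idx N hN d then (1:ℝ) else 0) := by
          refine setIntegral_mono_on (h_intg x u) ((hi1.add (hind i)).add hi3) measurableSet_Ioc
            fun α hα => ?_
          have hA : 0 ≤ |L| * (N:ℝ)⁻¹ := by positivity
          have hBn : 0 ≤ (if idx N hN α = i then (1:ℝ) else 0) := by split_ifs <;> norm_num
          have hCt : ∀ d ∈ D, 0 ≤ (if idx N hN α = idx N hN d then (1:ℝ) else 0) := fun d _ => by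
            split_ifs <;> norm_num
          have hCn := Finset.sum_nonneg hCt
          by_cases h1 : idx N hN α = i
          · have := h01 x u α hα
            rw [if_pos h1]
            linarith
          by_cases h2 : ∃ d ∈ D, idx N hN α = idx N hN d
          · obtain ⟨d, hd, hde⟩ := h2
            have h3 := Finset.single_le_sum hCt hd
            rw [if_pos hde] at h3
            have := h01 x u α hα
            linarith
          · push Not at h2
            have hbin := mem_bin_idx N hN α hα
            have hlip := hLD t x u _ (gamma_mem (idx N hN α)) α (Set.Ioc_subset_Icc_self hα)
              (fun d hd hmem => by
                rw [Set.uIcc_of_ge hbin.2] at hmem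
                exact h2 d hd (idx_eq N hN (idx N hN α) d
                  ⟨lt_of_lt_of_le hbin.1 hmem.1, hmem.2⟩).symm)
            have hsx : πs (idx N hN α) t x u = πe ((((idx N hN α : ℕ) : ℝ) + 1) / N) t x u := by
              rw [hπs, Function.update_of_ne h1]; rfl
            have hdist : |(((idx N hN α : ℕ) : ℝ) + 1) / N - α| ≤ (N:ℝ)⁻¹ := by
              rw [abs_of_nonneg (by linarith [hbin.2])]
              have := hbin.1
              have e : (((idx N hN α : ℕ) : ℝ) + 1) / N = ((idx N hN α : ℕ) : ℝ) / N + (N:ℝ)⁻¹ := by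
                field_simp
              linarith
            rw [hsx]
            have : L * |(((idx N hN α : ℕ) : ℝ) + 1) / N - α| ≤ |L| * (N:ℝ)⁻¹ :=
              mul_le_mul (le_abs_self L) hdist (abs_nonneg _) (abs_nonneg _)
            linarith
      _ = _ := by
          rw [integral_add hi2 hi3, integral_add hi1 (hind i),
            integral_finsetSum _ fun d _ => hind _]
          simp only [integral_idx_indicator]
          simp
          ring
  have hcomp : (N:ℝ)⁻¹ ≤ 1 / Real.sqrt N := by
    rw [← one_div]
    apply one_div_le_one_div_of_le (Real.sqrt_pos.2 hN')
    rw [Real.sqrt_le_left (by linarith)]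
    nlinarith
  calc _ = ∑ x, ∑ u, ∫ α in Set.Ioc (0:ℝ) 1, |πs (idx N hN α) t x u - πe α t x u| := by
        rw [integral_finsetSum _ fun x _ => integrable_finsetSum _ fun u _ => h_intg x u]
        exact Finset.sum_congr rfl fun x _ => integral_finsetSum _ fun u _ => h_intg x u
    _ ≤ ∑ x : 𝒳, ∑ u : 𝒰, (|L| + 1 + D.card) * (1 / Real.sqrt N) := by
        refine Finset.sum_le_sum fun x _ => Finset.sum_le_sum fun u _ => (hone x u).trans ?_
        gcongr
    _ = _ := by simp; ring

lemma final_bound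
    {𝒳 𝒰 : Type*} [Fintype 𝒳] [DecidableEq 𝒳] [Fintype 𝒰]
    (μ0 : 𝒳 → ℝ) (hμ0 : μ0 ∈ simplex 𝒳)
    (P : 𝒳 → 𝒰 → (𝒳 → ℝ) → 𝒳 → ℝ) (hP : IsKernel P)
    (LP : ℝ) (hPLip : KernelLipschitz P LP)
    (W : ℝ → ℝ → ℝ) (hW : IsGraphon W)
    (ξ : (N : ℕ) → Fin N → Fin N → ℝ) (hξ : ∀ N, IsEdgeWeights (ξ N))
    (πe : ℝ → ℕ → 𝒳 → 𝒰 → ℝ)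
    (hπe : ∀ α ∈ Set.Icc (0:ℝ) 1, IsPolicy (πe α))
    (hπemeas : ∀ t x u, Measurable fun α => πe α t x u)
    (hπeLip : EnsembleLipschitzUpTo πe)
    (μ : ℕ → ℝ → 𝒳 → ℝ) (hμ : IsMeanFieldOf W P μ0 πe μ)
    (t : ℕ) (Mf : ℝ) (f : 𝒳 → ℝ → ℝ) (hf : ∀ x, Measurable (f x)) (hfb : ∀ x α, |f x α| ≤ Mf) :
    ∃ C : ℝ, 0 < C ∧ ∀ (N : ℕ) (ε : ℝ), 0 < N →
      (∀ g : ℝ → ℝ, Measurable g → (∀ β, |g β| ≤ 1) →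
        (∫ α in Set.Ioc (0:ℝ) 1,
          |∫ β in Set.Ioc (0:ℝ) 1, (stepGraphon (ξ N) α β - W α β) * g β|) ≤ ε) →
      ∀ (i : Fin N) (πd : ℕ → 𝒳 → 𝒰 → ℝ), IsPolicy πd →
        (∑ X : Fin N → 𝒳,
            jointLaw P μ0 (ξ N) (Function.update (gammaN πe N) i πd) t X *
              |empInt f X - mfInt f (μ t)|) ≤ C * (ε + 1 / Real.sqrt N) := by
  obtain ⟨K, hK, hmis⟩ := policy_mismatch πe hπe hπemeas hπeLip
  have hL : KernelLipschitz P |LP| := fun x u ν ν' h h' =>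
    (hPLip x u ν ν' h h').trans (mul_le_mul_of_nonneg_right (le_abs_self _)
      (Finset.sum_nonneg fun _ _ => abs_nonneg _))
  set c := |Mf| + 1 with hc
  have hc0 : 0 < c := by positivity
  set C0 := indC |LP| K (Fintype.card 𝒳) t
  have hC0 : 0 ≤ C0 := indC_nonneg _ _ _ (abs_nonneg _) hK (by positivity) t
  refine ⟨c * C0 + 1, by positivity, ?_⟩
  intro N ε hN hε i πd hd
  have hε0 : 0 ≤ ε := by
    have := hε (fun _ => 0) measurable_const (by simp)
    simpa using this
  set g : 𝒳 → ℝ → ℝ := fun x α => c⁻¹ * f x α with hg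
  have hfg : f = fun x α => c * g x α := by
    funext x α; simp only [hg]; field_simp
  have hgb : ∀ x α, |g x α| ≤ 1 := by
    intro x α
    simp only [hg]
    rw [abs_mul, abs_of_pos (inv_pos.2 hc0), inv_mul_le_iff₀ hc0]
    have := hfb x α
    have := le_abs_self Mf
    linarith
  have hb := main_bound hN μ0 hμ0 P hP |LP| hL (abs_nonneg _) W hW (ξ N) (hξ N) ε hε
    (Function.update (gammaN πe N) i πd) (update_policy πe hπe i πd hd) πe hπe hπemeas μ hμ K hK
    (hmis N hN i πd hd) t g (fun x => (hf x).const_mul _) hgb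
  have e1 : ∀ X : Fin N → 𝒳, empInt f X = c * empInt g X := by
    intro X
    rw [hfg]
    unfold empInt
    simp only [integral_const_mul, Finset.mul_sum]
  have e2 : mfInt f (μ t) = c * mfInt g (μ t) := by
    rw [hfg]
    unfold mfInt
    simp only [mul_assoc, ← Finset.mul_sum, integral_const_mul]
  have e3 : ∀ X : Fin N → 𝒳, |empInt f X - mfInt f (μ t)| = c * |empInt g X - mfInt g (μ t)| := by
    intro X
    rw [e1, e2, ← mul_sub, abs_mul, abs_of_pos hc0]
  simp only [e3, mul_left_comm _ c, ← Finset.mul_sum]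
  have hr0 : 0 ≤ 1 / Real.sqrt (N:ℝ) := by positivity
  have := mul_le_mul_of_nonneg_left hb hc0.le
  refine this.trans ?_
  rw [← mul_assoc]
  gcongr
  linarith

/-- propagation of chaos for the empirical step measure ensemble. Under
Assumption (W) and Lipschitz continuity of P, for the N-agent policy
(π¹,…,π^{i−1},π̂,π^{i+1},…,π^N) with (π¹,…,π^N) = Γ_N(𝛑) and any deviation π̂ of agent i,
for every t ∈ 𝒯 and measurable f : 𝒳×[0,1] → ℝ with |f| ≤ M_f:
E[|𝛍^N_t(f) − 𝛍_t(f)|] → 0 as N → ∞, uniformly over all deviations π̂ ∈ Π and i ∈ 𝒱_N;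
moreover, if ‖W_N − W‖_{L∞→L1} → 0 at rate O(1/√N), so does this convergence. -/
theorem empirical_mean_field_convergence
    {𝒳 𝒰 : Type*} [Fintype 𝒳] [DecidableEq 𝒳] [Nonempty 𝒳] [Fintype 𝒰] [Nonempty 𝒰]
    (T : ℕ) (μ0 : 𝒳 → ℝ) (hμ0 : μ0 ∈ simplex 𝒳)
    (P : 𝒳 → 𝒰 → (𝒳 → ℝ) → 𝒳 → ℝ) (hP : IsKernel P)
    (LP : ℝ) (hPLip : KernelLipschitz P LP)
    (W : ℝ → ℝ → ℝ) (hW : IsGraphon W)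
    (ξ : (N : ℕ) → Fin N → Fin N → ℝ) (hξ : ∀ N, IsEdgeWeights (ξ N))
    (hWconv : OpConvergesTo (fun N => stepGraphon (ξ N)) W)
    (πe : ℝ → ℕ → 𝒳 → 𝒰 → ℝ)
    (hπe : ∀ α ∈ Set.Icc (0:ℝ) 1, IsPolicy (πe α))
    (hπemeas : ∀ t x u, Measurable fun α => πe α t x u)
    (hπeLip : EnsembleLipschitzUpTo πe)
    (μ : ℕ → ℝ → 𝒳 → ℝ) (hμ : IsMeanFieldOf W P μ0 πe μ) :
    (∀ t < T, ∀ (Mf : ℝ) (f : 𝒳 → ℝ → ℝ), (∀ x, Measurable (f x)) → (∀ x α, |f x α| ≤ Mf) →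
      ∀ ε > (0:ℝ), ∃ N₀ : ℕ, ∀ N > N₀, ∀ (i : Fin N) (πd : ℕ → 𝒳 → 𝒰 → ℝ), IsPolicy πd →
        (∑ X : Fin N → 𝒳,
            jointLaw P μ0 (ξ N) (Function.update (gammaN πe N) i πd) t X *
              |empInt f X - mfInt f (μ t)|) ≤ ε) ∧
    (OpRateSqrt (fun N => stepGraphon (ξ N)) W →
      ∀ t < T, ∀ (Mf : ℝ) (f : 𝒳 → ℝ → ℝ), (∀ x, Measurable (f x)) → (∀ x α, |f x α| ≤ Mf) →
        ∃ C : ℝ, ∀ N : ℕ, 1 ≤ N → ∀ (i : Fin N) (πd : ℕ → 𝒳 → 𝒰 → ℝ), IsPolicy πd →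
          (∑ X : Fin N → 𝒳,
              jointLaw P μ0 (ξ N) (Function.update (gammaN πe N) i πd) t X *
                |empInt f X - mfInt f (μ t)|) ≤ C / Real.sqrt N) := by
  refine ⟨?_, ?_⟩
  · intro t _ Mf f hf hfb ε hε
    obtain ⟨C, hC, hb⟩ := final_bound μ0 hμ0 P hP LP hPLip W hW ξ hξ πe hπe hπemeas hπeLip μ hμ
      t Mf f hf hfb
    obtain ⟨N1, hN1⟩ := hWconv (ε / (2 * C)) (by positivity)
    have hlim : Tendsto (fun N : ℕ => 1 / Real.sqrt (N:ℝ)) atTop (nhds 0) := by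
      simp only [one_div]
      exact tendsto_inv_atTop_zero.comp (Real.tendsto_sqrt_atTop.comp tendsto_natCast_atTop_atTop)
    obtain ⟨N2, hN2⟩ := eventually_atTop.1
      (hlim.eventually (gt_mem_nhds (show (0:ℝ) < ε / (2 * C) by positivity)))
    refine ⟨max N1 N2, fun N hN i πd hd => ?_⟩
    have h1 : N1 ≤ N := (le_max_left _ _).trans hN.le
    have h2 : N2 ≤ N := (le_max_right _ _).trans hN.le
    refine (hb N _ i.pos (hN1 N h1) i πd hd).trans ?_
    have h3 := (hN2 N h2).le
    calc C * (ε / (2 * C) + 1 / Real.sqrt N) ≤ C * (ε / (2 * C) + ε / (2 * C)) := by gcongr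
      _ = ε := by field_simp; ring
  · rintro ⟨C', hC'⟩ t _ Mf f hf hfb
    obtain ⟨C, hC, hb⟩ := final_bound μ0 hμ0 P hP LP hPLip W hW ξ hξ πe hπe hπemeas hπeLip μ hμ
      t Mf f hf hfb
    refine ⟨C * (C' + 1), fun N hN i πd hd => ?_⟩
    refine (hb N _ i.pos (hC' N hN) i πd hd).trans (le_of_eq ?_)
    ring

end GMFG
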